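/- arXiv:1301.5799 — 3 statements merged into one kernel-verified Lean document; each statement's English description precedes it below -/
import Mathlib

section
/- Let K be a compact Hausdorff space belonging to the class G₀ (defined below). The following conditions are equivalent: (i) K is a Corson compact; (ii) C(L) has a 1-projectional skeleton for every continuous image L of K; (iii) (B_{C(L)*}, w*) has a retractional skeleton for every continuous image L of K; (iv) P(L) has a retractional skeleton for every continuous image L of K. -/
open Filter Topology TopologicalSpace Set

universe u v

/-- A retractional skeleton in a topological space `K`: a family `r s : C(K, K)` of continuous
retractions indexed by an up-directed (nonempty) partially ordered set `Γ` such that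
(i) each `r s` has metrizable range and the net `(r s x)` converges to `x`;
(ii) `s ≤ t` implies `r s ∘ r t = r t ∘ r s = r s`;
(iii) each strictly increasing sequence has a supremum `t` and `r t x = lim_n r (f n) x`. -/
structure RetractionalSkeleton (K : Type u) [TopologicalSpace K] : Type (u + 1) where
  Γ : Type u
  [po : PartialOrder Γ]
  [ne : Nonempty Γ]
  directed : ∀ s t : Γ, ∃ w, s ≤ w ∧ t ≤ w
  r : Γ → C(K, K)
  isRetraction : ∀ s, ∀ x : K, r s (r s x) = r s x
  metrizable : ∀ s, MetrizableSpace ↥(Set.range (r s))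
  tendsto_id : ∀ x : K, Tendsto (fun s => r s x) atTop (𝓝 x)
  comp_eq_of_le : ∀ s t : Γ, s ≤ t → ∀ x : K, r s (r t x) = r s x ∧ r t (r s x) = r s x
  sup_seq : ∀ f : ℕ → Γ, StrictMono f → ∃ t : Γ, IsLUB (Set.range f) t ∧
    ∀ x : K, Tendsto (fun n => r (f n) x) atTop (𝓝 (r t x))

/-- The set `D(𝔰) = ⋃ s, r s [K]` induced by a retractional skeleton. -/
def RetractionalSkeleton.inducedSet {K : Type u} [TopologicalSpace K]
    (𝔰 : RetractionalSkeleton K) : Set K := ⋃ s, Set.range (𝔰.r s)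

/-- `D` is induced by an r-skeleton in `K`. -/
def IsInducedByRSkeleton {K : Type u} [TopologicalSpace K] (D : Set K) : Prop :=
  ∃ 𝔰 : RetractionalSkeleton K, 𝔰.inducedSet = D

/-- `K` has a retractional skeleton. -/
def HasRetractionalSkeleton (K : Type u) [TopologicalSpace K] : Prop :=
  Nonempty (RetractionalSkeleton K)

/-- `K` is a Corson compact space: it is homeomorphic to a compact subset of
`Σ(Γ) = {x ∈ ℝ^Γ : x γ ≠ 0 for at most countably many γ}` for some set `Γ`. -/
def IsCorsonCompact (K : Type u) [TopologicalSpace K] : Prop :=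
  ∃ (Γ : Type u) (A : Set (Γ → ℝ)), IsCompact A ∧
    (∀ x ∈ A, {γ | x γ ≠ 0}.Countable) ∧ Nonempty (K ≃ₜ ↥A)

/-- A projectional skeleton in a normed space `X`: a family of bounded linear projections
indexed by an up-directed (nonempty) partially ordered set `Γ` such that
(i) `X = ⋃ s, P s [X]` and each `P s [X]` is separable;
(ii) `s ≤ t` implies `P s ∘ P t = P t ∘ P s = P s`;
(iii) each strictly increasing sequence has a supremum `t` with
`P t [X] = closure (⋃ n, P (f n) [X])`. -/
structure ProjectionalSkeleton (X : Type u) [NormedAddCommGroup X] [NormedSpace ℝ X] :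
    Type (u + 1) where
  Γ : Type u
  [po : PartialOrder Γ]
  [ne : Nonempty Γ]
  directed : ∀ s t : Γ, ∃ w, s ≤ w ∧ t ≤ w
  P : Γ → X →L[ℝ] X
  idem : ∀ s, ∀ x : X, P s (P s x) = P s x
  separable : ∀ s, IsSeparable (Set.range (P s))
  covers : ∀ x : X, ∃ s, x ∈ Set.range (P s)
  comp_eq_of_le : ∀ s t : Γ, s ≤ t → ∀ x : X, P s (P t x) = P s x ∧ P t (P s x) = P s x
  sup_seq : ∀ f : ℕ → Γ, StrictMono f → ∃ t : Γ, IsLUB (Set.range f) t ∧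
    (Set.range (P t) : Set X) = closure (⋃ n, Set.range (P (f n)))

/-- `X` has a 1-projectional skeleton: a projectional skeleton with `‖P s‖ ≤ 1` for all `s`. -/
def Has1ProjectionalSkeleton (X : Type u) [NormedAddCommGroup X] [NormedSpace ℝ X] : Prop :=
  ∃ 𝔰 : ProjectionalSkeleton X, ∀ s, ‖𝔰.P s‖ ≤ 1

/-- The closed unit ball of the dual of `X`, as a subset of the weak* dual `(X*, w*)`. -/
def dualBall (X : Type u) [NormedAddCommGroup X] [NormedSpace ℝ X] : Set (WeakDual ℝ X) :=
  {φ | ∀ x : X, |φ x| ≤ ‖x‖}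

/-- The space `P(K)` of Radon probability measures on a compact space `K`, identified via the
Riesz representation theorem with the set of positive normalized functionals in the weak*
dual of `C(K, ℝ)`; the subspace topology is the w*-topology. -/
def probMeasuresSet (K : Type u) [TopologicalSpace K] [CompactSpace K] :
    Set (WeakDual ℝ C(K, ℝ)) :=
  {φ | φ 1 = 1 ∧ ∀ f : C(K, ℝ), (∀ x, 0 ≤ f x) → 0 ≤ φ f}

/-- The first uncountable ordinal `ω₁`. -/
noncomputable def omega1 : Ordinal.{0} := (Cardinal.aleph 1).ord

/-- The ordinal segment `[0, ω₁]` with its (order-induced) topology. -/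
abbrev OrdinalSegmentOmega1 : Type 1 := ↥(Set.Iic omega1)

/-- `K` belongs to the class `G₀`: for every nonempty open `U ⊆ K`, if `U` contains no
Gδ point of `K`, then the one-point compactification of `U` contains a homeomorphic copy
of the ordinal segment `[0, ω₁]`. -/
def InClassG0 (K : Type u) [TopologicalSpace K] : Prop :=
  ∀ U : Set K, IsOpen U → U.Nonempty → (∀ x ∈ U, ¬ IsGδ ({x} : Set K)) →
    ∃ f : OrdinalSegmentOmega1 → OnePoint ↥U, Topology.IsEmbedding f

/-!
(i) implies (ii). Embed the Corson compact space `K` in a power of `ℝ` with countably supported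
points, and let `φ : K → L` be onto. The countable coordinate sets `M` such that setting to zero
the coordinates outside `M` preserves the kernel of `φ` induce a retractional skeleton on `L`, and
composing with its retractions is a projectional skeleton of `C(L)` by the Stone–Weierstrass
theorem.

(ii) implies (iii) and (iv). The adjoints of the projections are weak* continuous, preserve the dual
ball and, from the index on at which constants are fixed, the probability measures.

(iii) or (iv) implies (i). Given a skeleton on the ball or on `P(L)`, call `x : L` good if its point
evaluation lies in the set induced by the skeleton; induced sets are closed under closures of
countable subsets and are countably tight. Every Gδ point is good, and so is every point `c` at
which two open sets meet whose closures have only `c` in common: some retraction sends the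
evaluation at `c` to a probability measure carried by both closures. If all points are good, then
`L` embeds in the induced set, hence `L` has retractions onto the closures of suitable hulls of its
subsets, and decomposing `L` along transfinite chains of them gives a point-countable separating
family of functions, so that `L` is Corson.

The class `G₀` enters through the density of Gδ points. Were they not dense, some image of `K`
without isolated points would contain `[0, ω₁]`. Glue `λ` to `λ + 1` for all countable limits `λ`,
and `0` to `ω₁`. The copy of `[0, ω₁]` is nowhere dense and one point of each pair is isolated in
it, so the glued points are good by the two-sided criterion; but the image of `ω₁` is in the closure
of the others and of no countable subset of them, against countable tightness. With Gδ points dense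
in `K`, glue a non-isolated point `x` to another non-isolated point: it becomes good in the
quotient, and tightness there provides countably many Gδ points accumulating at `x`, so that `x` is
good in `K`.
-/

/-! ### Retractional skeletons and their induced sets -/

lemma eventually_const_or_exists_strictMono_comp {α : Type*} [PartialOrder α] {f : ℕ → α}
    (hf : Monotone f) : (∃ N, ∀ n ≥ N, f n = f N) ∨
      ∃ (g : ℕ → α) (m : ℕ → ℕ), StrictMono g ∧ Tendsto m atTop atTop ∧ f = g ∘ m := by
  classical
  let jump : ℕ → Prop := fun n => f n < f (n + 1)
  have const_of_no_jump {a b : ℕ} (hab : a ≤ b) (h : ∀ i, a ≤ i → i < b → ¬ jump i) :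
      f b = f a := by
    induction b, hab using Nat.le_induction with
    | base => rfl
    | succ b hab ih =>
      rw [← ih fun i hai hib => h i hai (hib.trans b.lt_succ_self)]
      exact ((hf b.le_succ).eq_of_not_lt (h b hab b.lt_succ_self)).symm
  by_cases hJ : {n | jump n}.Finite
  · left
    obtain ⟨N, hN⟩ := hJ.bddAbove
    refine ⟨N + 1, fun n hn => const_of_no_jump hn fun i hi _ hj => ?_⟩
    exact absurd (hN hj) (by lia)
  · right
    refine ⟨f ∘ Nat.nth jump, Nat.count jump, strictMono_nat_of_lt_succ fun k => ?_, ?_, ?_⟩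
    · exact (Nat.nth_mem_of_infinite hJ k).trans_le (hf (Nat.nth_strictMono hJ k.lt_succ_self))
    · exact tendsto_atTop_atTop_of_monotone (Nat.count_monotone jump) fun n =>
        ⟨Nat.nth jump n, (Nat.count_nth_of_infinite hJ n).ge⟩
    · funext n
      refine (const_of_no_jump (Nat.le_nth_count hJ n) fun i hni hi hj => ?_).symm
      exact hi.not_ge ((Nat.nth_monotone hJ (Nat.count_monotone jump hni)).trans_eq
        (Nat.nth_count hj))

lemma exists_monotone_ge {α β : Type*} [PartialOrder β] [LocallyFiniteOrderBot β]
    [WellFoundedLT β] [Preorder α] [IsDirectedOrder α] (g : β → α) :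
    ∃ f : β → α, Monotone f ∧ ∀ b, g b ≤ f b := by
  have exists_bound (b : β) (ih : ∀ a, a < b → α) : ∃ M, g b ≤ M ∧ ∀ a h, ih a h ≤ M := by
    have : Nonempty α := ⟨g b⟩
    obtain ⟨M, hM⟩ := (finite_range fun a : Iio b => ih a a.2).bddAbove.insert (g b)
    exact ⟨M, hM (mem_insert _ _), fun a h => hM (.inr ⟨⟨a, h⟩, rfl⟩)⟩
  choose bound hg hbound using exists_bound
  have hwf : WellFounded fun a b : β => a < b := wellFounded_lt
  have hfix (b : β) : hwf.fix bound b = bound b fun a _ => hwf.fix bound a := hwf.fix_eq bound b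
  refine ⟨hwf.fix bound, fun a b hab => ?_, fun b => hfix b ▸ hg b _⟩
  rcases hab.eq_or_lt with rfl | hlt
  · exact le_rfl
  · exact (hbound b _ a hlt).trans_eq (hfix b).symm

attribute [instance] RetractionalSkeleton.po RetractionalSkeleton.ne

namespace RetractionalSkeleton

variable {P : Type u} [TopologicalSpace P] (𝔰 : RetractionalSkeleton P)

instance : IsDirectedOrder 𝔰.Γ := ⟨𝔰.directed⟩

lemma r_eq_self_of_le {s t : 𝔰.Γ} (h : s ≤ t) {x : P} (hx : 𝔰.r s x = x) : 𝔰.r t x = x := by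
  simpa only [hx] using (𝔰.comp_eq_of_le s t h x).2

lemma mem_inducedSet_iff {x : P} : x ∈ 𝔰.inducedSet ↔ ∃ s, 𝔰.r s x = x := by
  simp only [inducedSet, mem_iUnion, mem_range]
  refine exists_congr fun s => ⟨?_, fun h => ⟨x, h⟩⟩
  rintro ⟨y, rfl⟩
  exact 𝔰.isRetraction s y

lemma exists_isLUB_tendsto {f : ℕ → 𝔰.Γ} (hf : Monotone f) :
    ∃ t, IsLUB (range f) t ∧ ∀ x, Tendsto (fun n => 𝔰.r (f n) x) atTop (𝓝 (𝔰.r t x)) := by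
  obtain ⟨N, hN⟩ | ⟨g, m, hg, hm, rfl⟩ := eventually_const_or_exists_strictMono_comp hf
  · refine ⟨f N, ⟨?_, fun b hb => hb (mem_range_self N)⟩, fun x => tendsto_const_nhds.congr' ?_⟩
    · rintro _ ⟨n, rfl⟩
      exact (hf (le_max_left n N)).trans_eq (hN _ (le_max_right n N))
    · filter_upwards [eventually_ge_atTop N] with n hn
      rw [hN n hn]
  · obtain ⟨t, ht, hlim⟩ := 𝔰.sup_seq g hg
    refine ⟨t, ⟨(range_comp_subset_range m g).trans ht.1, fun b hb => ht.2 ?_⟩,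
      fun x => (hlim x).comp hm⟩
    rintro _ ⟨k, rfl⟩
    obtain ⟨n, hn⟩ := (hm.eventually_ge_atTop k).exists
    exact (hg.monotone hn).trans (hb (mem_range_self n))

lemma bddAbove_range (g : ℕ → 𝔰.Γ) : BddAbove (range g) := by
  obtain ⟨f, hf, hgf⟩ := exists_monotone_ge g
  obtain ⟨t, ht, -⟩ := 𝔰.exists_isLUB_tendsto hf
  exact ⟨t, forall_mem_range.2 fun n => (hgf n).trans (ht.1 (mem_range_self n))⟩

lemma exists_ge_of_countable {A : Set P} (hA : A.Countable) (hAD : A ⊆ 𝔰.inducedSet) (s₀ : 𝔰.Γ) :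
    ∃ t ≥ s₀, ∀ a ∈ A, 𝔰.r t a = a := by
  rcases A.eq_empty_or_nonempty with rfl | hne
  · exact ⟨s₀, le_rfl, by simp⟩
  obtain ⟨e, rfl⟩ := hA.exists_eq_range hne
  choose g hg using fun n => 𝔰.mem_inducedSet_iff.1 (hAD (mem_range_self n))
  obtain ⟨t, ht⟩ := 𝔰.bddAbove_range g
  obtain ⟨w, hsw, htw⟩ := 𝔰.directed s₀ t
  exact ⟨w, hsw, forall_mem_range.2 fun n =>
    𝔰.r_eq_self_of_le ((ht (mem_range_self n)).trans htw) (hg n)⟩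

lemma r_eq_self_of_mem_closure [T2Space P] {A : Set P} {t : 𝔰.Γ} (h : ∀ a ∈ A, 𝔰.r t a = a)
    {x : P} (hx : x ∈ closure A) : 𝔰.r t x = x :=
  closure_minimal h (isClosed_eq (𝔰.r t).continuous continuous_id) hx

lemma closure_subset_inducedSet_of_countable [T2Space P] {A : Set P} (hA : A.Countable)
    (hAD : A ⊆ 𝔰.inducedSet) : closure A ⊆ 𝔰.inducedSet := by
  obtain ⟨t, -, ht⟩ := 𝔰.exists_ge_of_countable hA hAD (Classical.arbitrary _)
  exact fun x hx => 𝔰.mem_inducedSet_iff.2 ⟨t, 𝔰.r_eq_self_of_mem_closure ht hx⟩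

lemma exists_r_mem_nhds_and_map_eq [RegularSpace P] {Y : Type*} [TopologicalSpace Y]
    [FirstCountableTopology Y] [T2Space Y] {f : P → Y} (hf : Continuous f) {x : P} {O : Set P}
    (hO : O ∈ 𝓝 x) : ∃ t, 𝔰.r t x ∈ O ∧ f (𝔰.r t x) = f x := by
  obtain ⟨C, hCx, hC, hCO⟩ := exists_mem_nhds_isClosed_subset hO
  obtain ⟨V, hV⟩ := (𝓝 (f x)).exists_antitone_basis
  have eventually_mem (n : ℕ) : ∃ s₀, ∀ s ≥ s₀, 𝔰.r s x ∈ C ∧ f (𝔰.r s x) ∈ V n :=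
    eventually_atTop.1 (((𝔰.tendsto_id x).eventually hCx).and
      ((𝔰.tendsto_id x).eventually (hf.continuousAt (hV.mem n))))
  choose g hg using eventually_mem
  obtain ⟨s, hs, hgs⟩ := exists_monotone_ge g
  obtain ⟨t, -, hlim⟩ := 𝔰.exists_isLUB_tendsto hs
  refine ⟨t, hCO (hC.mem_of_tendsto (hlim x) (.of_forall fun n => (hg n _ (hgs n)).1)), ?_⟩
  exact tendsto_nhds_unique ((hf.tendsto _).comp (hlim x))
    (hV.tendsto fun n => (hg n _ (hgs n)).2)

lemma exists_countable_subset_mem_closure_image (s : 𝔰.Γ) {A : Set P} {x : P}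
    (hx : x ∈ closure A) : ∃ A' ⊆ A, A'.Countable ∧ 𝔰.r s x ∈ closure (𝔰.r s '' A') := by
  have := 𝔰.metrizable s
  have hq : Continuous (rangeFactorization (𝔰.r s)) := by fun_prop
  obtain ⟨u, huA, hu⟩ := mem_closure_iff_seq_limit.1
    (image_closure_subset_closure_image hq (mem_image_of_mem _ hx))
  choose a haA ha using huA
  refine ⟨range a, range_subset_iff.2 haA, countable_range a, ?_⟩
  refine mem_closure_of_tendsto ((continuous_subtype_val.tendsto _).comp hu)
    (.of_forall fun n => ⟨a n, mem_range_self n, ?_⟩)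
  exact congrArg Subtype.val (ha n)

lemma r_mem_closure_iUnion [T2Space P] [CompactSpace P] {f : ℕ → 𝔰.Γ} (hf : Monotone f)
    {t : 𝔰.Γ} (hlim : ∀ y, Tendsto (fun n => 𝔰.r (f n) y) atTop (𝓝 (𝔰.r t y)))
    {F : ℕ → Set P} {x : P} (hx : ∀ n, 𝔰.r (f n) x ∈ closure (𝔰.r (f n) '' F n))
    (hfix : ∀ n, ∀ a ∈ F n, 𝔰.r t a = a) : 𝔰.r t x ∈ closure (⋃ n, F n) := by
  set C := closure (⋃ n, F n)
  have hC : IsCompact C := isClosed_closure.isCompact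
  have isClosed_fibre (n : ℕ) : IsClosed {y | 𝔰.r (f n) y = 𝔰.r (f n) x} :=
    isClosed_eq (𝔰.r _).continuous continuous_const
  obtain ⟨y, hy⟩ : (⋂ n, C ∩ {y | 𝔰.r (f n) y = 𝔰.r (f n) x}).Nonempty := by
    refine IsCompact.nonempty_iInter_of_sequence_nonempty_isCompact_isClosed _ ?_ ?_
      (hC.inter_right (isClosed_fibre 0)) fun n => isClosed_closure.inter (isClosed_fibre n)
    · rintro n y ⟨hyC, hy⟩
      refine ⟨hyC, ?_⟩
      have hle := hf n.le_succ
      calc 𝔰.r (f n) y = 𝔰.r (f n) (𝔰.r (f (n + 1)) y) := (𝔰.comp_eq_of_le _ _ hle y).1.symm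
        _ = 𝔰.r (f n) (𝔰.r (f (n + 1)) x) := congrArg _ hy
        _ = 𝔰.r (f n) x := (𝔰.comp_eq_of_le _ _ hle x).1
    · intro n
      have himage : closure (𝔰.r (f n) '' F n) ⊆ 𝔰.r (f n) '' C :=
        closure_minimal (image_mono ((subset_iUnion F n).trans subset_closure))
          (hC.image (𝔰.r (f n)).continuous).isClosed
      exact himage (hx n)
  simp only [mem_iInter, mem_inter_iff, mem_ofPred_eq] at hy
  have hyx : 𝔰.r t y = 𝔰.r t x :=
    tendsto_nhds_unique (hlim y) ((hlim x).congr fun n => ((hy n).2).symm)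
  have hyt : 𝔰.r t y = y := 𝔰.r_eq_self_of_mem_closure
    (fun a ha => (mem_iUnion.1 ha).elim fun n => hfix n a) (hy 0).1
  rw [← hyx, hyt]
  exact (hy 0).1

lemma exists_r_mem_closure_inter_closure [T2Space P] [CompactSpace P] {A B : Set P}
    (hA : A ⊆ 𝔰.inducedSet) (hB : B ⊆ 𝔰.inducedSet) {x : P} (hxA : x ∈ closure A)
    (hxB : x ∈ closure B) (s₀ : 𝔰.Γ) :
    ∃ t ≥ s₀, ∃ A' ⊆ A, ∃ B' ⊆ B, A'.Countable ∧ B'.Countable ∧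
      𝔰.r t x ∈ closure A' ∧ 𝔰.r t x ∈ closure B' := by
  choose FA hFA hFAc hFAx using fun s => 𝔰.exists_countable_subset_mem_closure_image s hxA
  choose FB hFB hFBc hFBx using fun s => 𝔰.exists_countable_subset_mem_closure_image s hxB
  choose next hle hfix using fun s =>
    𝔰.exists_ge_of_countable ((hFAc s).union (hFBc s))
      (union_subset ((hFA s).trans hA) ((hFB s).trans hB)) s
  let f : ℕ → 𝔰.Γ := fun n => next^[n] s₀
  have hf_succ (n : ℕ) : f (n + 1) = next (f n) := Function.iterate_succ_apply' next n s₀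
  have hf : Monotone f := monotone_nat_of_le_succ fun n => (hle (f n)).trans_eq (hf_succ n).symm
  obtain ⟨t, ht, hlim⟩ := 𝔰.exists_isLUB_tendsto hf
  have hfix_t (n : ℕ) : ∀ a ∈ FA (f n) ∪ FB (f n), 𝔰.r t a = a := fun a ha =>
    𝔰.r_eq_self_of_le ((hf_succ n).symm.trans_le (ht.1 (mem_range_self (n + 1)))) (hfix _ a ha)
  refine ⟨t, ht.1 (mem_range_self 0), ⋃ n, FA (f n), iUnion_subset fun n => hFA _,
    ⋃ n, FB (f n), iUnion_subset fun n => hFB _, countable_iUnion fun n => hFAc _,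
    countable_iUnion fun n => hFBc _, ?_, ?_⟩
  · exact 𝔰.r_mem_closure_iUnion hf hlim (fun n => hFAx _) fun n a ha => hfix_t n a (.inl ha)
  · exact 𝔰.r_mem_closure_iUnion hf hlim (fun n => hFBx _) fun n a ha => hfix_t n a (.inr ha)

lemma exists_countable_subset_mem_closure [T2Space P] [CompactSpace P] {A : Set P}
    (hA : A ⊆ 𝔰.inducedSet) {x : P} (hx : x ∈ 𝔰.inducedSet) (hxA : x ∈ closure A) :
    ∃ A' ⊆ A, A'.Countable ∧ x ∈ closure A' := by
  obtain ⟨s, hs⟩ := 𝔰.mem_inducedSet_iff.1 hx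
  obtain ⟨t, hst, A', hA', -, -, hc, -, h, -⟩ :=
    𝔰.exists_r_mem_closure_inter_closure hA hA hxA hxA s
  exact ⟨A', hA', hc, 𝔰.r_eq_self_of_le hst hs ▸ h⟩

end RetractionalSkeleton

/-! ### The projectional skeleton of `C(X)` induced by a retractional skeleton of `X` -/

lemma mem_topologicalClosure_of_forall_eq {X : Type*} [TopologicalSpace X] [CompactSpace X]
    (A : Subalgebra ℝ C(X, ℝ)) {g : C(X, ℝ)}
    (hg : ∀ x y, (∀ a ∈ A, a x = a y) → g x = g y) : g ∈ A.topologicalClosure := by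
  let Φ : C(X, A → ℝ) := ⟨fun x a => a.1 x, by fun_prop⟩
  have := isCompact_iff_compactSpace.1 (isCompact_range Φ.continuous)
  let q : C(X, range Φ) := ⟨rangeFactorization Φ, by fun_prop⟩
  have hq : IsQuotientMap q :=
    q.continuous.isClosedMap.isQuotientMap q.continuous rangeFactorization_surjective
  let B : Subalgebra ℝ C(range Φ, ℝ) := A.comap (ContinuousMap.compRightAlgHom ℝ ℝ q)
  have hB : B.SeparatesPoints := by
    intro y z hyz
    obtain ⟨a, ha⟩ : ∃ a, y.1 a ≠ z.1 a := by
      contrapose! hyz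
      exact Subtype.ext (funext hyz)
    exact ⟨_, ⟨⟨_, (continuous_apply a).comp continuous_subtype_val⟩, a.2, rfl⟩, ha⟩
  let g' : C(range Φ, ℝ) := hq.lift g fun x y hxy =>
    hg x y fun a ha => congrFun (congrArg Subtype.val hxy) ⟨a, ha⟩
  have hg'B : g' ∈ B.topologicalClosure := by
    rw [ContinuousMap.subalgebra_topologicalClosure_eq_top_of_separatesPoints B hB]
    trivial
  have hg' : g'.comp q = g := hq.lift_comp g _
  rw [← hg']
  exact map_mem_closure (f := fun b => b.comp q) (ContinuousMap.continuous_precomp q) hg'B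
    fun b hb => hb

namespace RetractionalSkeleton

variable {X : Type u} [TopologicalSpace X]

/-- The functions on `X` that factor through the retraction `𝔰.r s`. They form the range of the
projection `f ↦ f ∘ 𝔰.r s`. -/
def invariants (𝔰 : RetractionalSkeleton X) (s : 𝔰.Γ) : Subalgebra ℝ C(X, ℝ) :=
  AlgHom.equalizer (ContinuousMap.compRightAlgHom ℝ ℝ (𝔰.r s)) (AlgHom.id ℝ C(X, ℝ))

variable (𝔰 : RetractionalSkeleton X) {s t : 𝔰.Γ}

lemma mem_invariants_iff {f : C(X, ℝ)} : f ∈ 𝔰.invariants s ↔ ∀ x, f (𝔰.r s x) = f x :=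
  DFunLike.ext_iff

lemma comp_r_mem_invariants (f : C(X, ℝ)) : f.comp (𝔰.r s) ∈ 𝔰.invariants s :=
  𝔰.mem_invariants_iff.2 fun x => congrArg f (𝔰.isRetraction s x)

lemma invariants_mono : Monotone 𝔰.invariants := fun s t h f hf =>
  𝔰.mem_invariants_iff.2 fun x => by
    rw [← 𝔰.mem_invariants_iff.1 hf, (𝔰.comp_eq_of_le s t h x).1, 𝔰.mem_invariants_iff.1 hf]

lemma isClosed_invariants : IsClosed (𝔰.invariants s : Set C(X, ℝ)) :=
  isClosed_eq (ContinuousMap.continuous_precomp (𝔰.r s)) continuous_id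

lemma range_compCLM : range (ContinuousMap.compCLM ℝ ℝ (𝔰.r s)) = 𝔰.invariants s := by
  refine Subset.antisymm ?_ fun f hf => ⟨f, hf⟩
  rintro _ ⟨f, rfl⟩
  exact 𝔰.comp_r_mem_invariants f

variable [CompactSpace X]

lemma isSeparable_invariants : IsSeparable (𝔰.invariants s : Set C(X, ℝ)) := by
  have := 𝔰.metrizable s
  have := isCompact_iff_compactSpace.1 (isCompact_range (𝔰.r s).continuous)
  let q : C(X, range (𝔰.r s)) := ⟨rangeFactorization (𝔰.r s), by fun_prop⟩
  refine (isSeparable_range (ContinuousMap.continuous_precomp (Z := ℝ) q)).mono fun f hf =>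
    ⟨f.restrict _, ?_⟩
  exact hf

variable [T2Space X]

lemma r_eq_of_forall_mem_invariants {x y : X} (h : ∀ f ∈ 𝔰.invariants s, f x = f y) :
    𝔰.r s x = 𝔰.r s y := by
  by_contra hne
  obtain ⟨f, hf, hne⟩ := separatesPoints_continuous_of_t35Space hne
  exact hne (h _ (𝔰.comp_r_mem_invariants ⟨f, hf⟩))

lemma closure_iUnion_invariants {f : ℕ → 𝔰.Γ} (hf : Monotone f) (ht : IsLUB (range f) t)
    (hlim : ∀ x, Tendsto (fun n => 𝔰.r (f n) x) atTop (𝓝 (𝔰.r t x))) :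
    closure (⋃ n, (𝔰.invariants (f n) : Set C(X, ℝ))) = 𝔰.invariants t := by
  refine Subset.antisymm (closure_minimal (iUnion_subset fun n =>
    𝔰.invariants_mono (ht.1 (mem_range_self n))) 𝔰.isClosed_invariants) fun g hg => ?_
  rw [← Subalgebra.coe_iSup_of_directed (K := fun n => 𝔰.invariants (f n))
      (𝔰.invariants_mono.comp hf).directed_le,
    ← Subalgebra.topologicalClosure_coe]
  refine mem_topologicalClosure_of_forall_eq _ fun x y hxy => ?_
  have hr (n : ℕ) : 𝔰.r (f n) x = 𝔰.r (f n) y :=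
    𝔰.r_eq_of_forall_mem_invariants fun a ha => hxy a (le_iSup (fun n => 𝔰.invariants (f n)) n ha)
  have hrt : 𝔰.r t x = 𝔰.r t y :=
    tendsto_nhds_unique (hlim x) ((hlim y).congr fun n => (hr n).symm)
  rw [← 𝔰.mem_invariants_iff.1 hg x, hrt, 𝔰.mem_invariants_iff.1 hg]

lemma exists_mem_invariants (f : C(X, ℝ)) : ∃ s, f ∈ 𝔰.invariants s := by
  have hf : f ∈ closure (⋃ s, (𝔰.invariants s : Set C(X, ℝ))) := by
    rw [← Subalgebra.coe_iSup_of_directed 𝔰.invariants_mono.directed_le,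
      ← Subalgebra.topologicalClosure_coe]
    refine mem_topologicalClosure_of_forall_eq _ fun x y hxy => congrArg f ?_
    have hr (s : 𝔰.Γ) : 𝔰.r s x = 𝔰.r s y :=
      𝔰.r_eq_of_forall_mem_invariants fun a ha => hxy a (le_iSup 𝔰.invariants s ha)
    exact tendsto_nhds_unique (𝔰.tendsto_id x) ((𝔰.tendsto_id y).congr fun s => (hr s).symm)
  obtain ⟨u, hu, hlim⟩ := mem_closure_iff_seq_limit.1 hf
  choose s hs using fun n => mem_iUnion.1 (hu n)
  obtain ⟨t, ht⟩ := 𝔰.bddAbove_range s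
  exact ⟨t, 𝔰.isClosed_invariants.mem_of_tendsto hlim
    (.of_forall fun n => 𝔰.invariants_mono (ht (mem_range_self n)) (hs n))⟩

end RetractionalSkeleton

theorem has1ProjectionalSkeleton_of_hasRetractionalSkeleton {X : Type u} [TopologicalSpace X]
    [CompactSpace X] [T2Space X] (h : HasRetractionalSkeleton X) :
    Has1ProjectionalSkeleton C(X, ℝ) := by
  obtain ⟨𝔰⟩ := h
  let P : ProjectionalSkeleton C(X, ℝ) :=
    { Γ := 𝔰.Γ
      directed := 𝔰.directed
      P := fun s => ContinuousMap.compCLM ℝ ℝ (𝔰.r s)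
      idem := fun s f => ContinuousMap.ext fun x => congrArg f (𝔰.isRetraction s x)
      separable := fun s => 𝔰.range_compCLM.symm ▸ 𝔰.isSeparable_invariants
      covers := fun f => (𝔰.exists_mem_invariants f).imp fun s hs => 𝔰.range_compCLM.ge hs
      comp_eq_of_le := fun s t hst f =>
        ⟨ContinuousMap.ext fun x => congrArg f (𝔰.comp_eq_of_le s t hst x).2,
          ContinuousMap.ext fun x => congrArg f (𝔰.comp_eq_of_le s t hst x).1⟩
      sup_seq := fun f hf => by
        obtain ⟨t, ht, hlim⟩ := 𝔰.sup_seq f hf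
        refine ⟨t, ht, ?_⟩
        simp only [𝔰.range_compCLM, 𝔰.closure_iUnion_invariants hf.monotone ht hlim] }
  refine ⟨P, fun s => ContinuousLinearMap.opNorm_le_bound _ zero_le_one fun f => ?_⟩
  rw [one_mul, ContinuousMap.norm_le _ (norm_nonneg f)]
  exact fun x => f.norm_coe_le_norm (𝔰.r s x)

/-! ### Metrizable compacta -/

lemma metrizableSpace_of_countable_separating {J X : Type*} [TopologicalSpace X] [CompactSpace X]
    [Countable J] {f : J → X → ℝ} (hf : ∀ j, Continuous (f j))
    (hsep : ∀ x y, (∀ j, f j x = f j y) → x = y) : MetrizableSpace X :=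
  ((continuous_pi hf : Continuous fun x j => f j x).isClosedEmbedding fun x y hxy =>
    hsep x y (congrFun hxy)).isEmbedding.metrizableSpace

lemma exists_continuousMap_seq_separating (X : Type*) [TopologicalSpace X] [CompactSpace X]
    [T2Space X] [SeparableSpace C(X, ℝ)] :
    ∃ u : ℕ → C(X, ℝ), ∀ x y, (∀ n, u n x = u n y) → x = y := by
  refine ⟨denseSeq C(X, ℝ), fun x y hxy => by_contra fun hne => ?_⟩
  obtain ⟨h, hh, hne⟩ := separatesPoints_continuous_of_t35Space hne
  have hclosed : IsClosed {g : C(X, ℝ) | g x = g y} := isClosed_eq (by fun_prop) (by fun_prop)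
  exact hne (closure_minimal (range_subset_iff.2 hxy) hclosed
    (denseRange_denseSeq C(X, ℝ) ⟨h, hh⟩))

lemma metrizableSpace_of_surjective {X Y : Type*} [TopologicalSpace X] [CompactSpace X]
    [MetrizableSpace X] [TopologicalSpace Y] [CompactSpace Y] [T2Space Y] {f : X → Y}
    (hf : Continuous f) (hsurj : Function.Surjective f) : MetrizableSpace Y := by
  have hiso : Isometry fun g : C(Y, ℝ) => g.comp ⟨f, hf⟩ := Isometry.of_dist_eq fun g h => by
    simp only [dist_eq_norm_sub, ContinuousMap.norm_eq_iSup_norm]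
    exact hsurj.iSup_comp fun y => ‖(g - h) y‖
  have := hiso.isUniformInducing.isInducing.secondCountableTopology
  obtain ⟨u, hu⟩ := exists_continuousMap_seq_separating Y
  exact metrizableSpace_of_countable_separating (fun n => (u n).continuous) hu

lemma exists_countable_image_dense {X Y : Type*} [TopologicalSpace Y]
    [SecondCountableTopology Y] (f : X → Y) (S : Set X) :
    ∃ Q ⊆ S, Q.Countable ∧ f '' S ⊆ closure (f '' Q) := by
  obtain ⟨D, hD, hdense⟩ := exists_countable_dense (f '' S)
  choose g hgS hg using fun y : f '' S => y.2
  refine ⟨g '' D, image_subset_iff.2 fun y _ => hgS y, hD.image g, fun y hy => ?_⟩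
  rw [image_image, image_congr fun y _ => hg y]
  exact image_closure_subset_closure_image continuous_subtype_val
    (mem_image_of_mem Subtype.val (hdense ⟨y, hy⟩))

/-! ### Finitary closure systems -/

/-- `N` is closed under the finitary set-valued operation `c`. -/
def ClosedUnder {E : Type*} (c : Finset E → Set E) (N : Set E) : Prop :=
  ∀ F : Finset E, ↑F ⊆ N → c F ⊆ N

lemma closedUnder_sInter {E : Type*} {c : Finset E → Set E} {𝒩 : Set (Set E)}
    (h𝒩 : ∀ N ∈ 𝒩, ClosedUnder c N) : ClosedUnder c (⋂₀ 𝒩) := fun F hF =>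
  subset_sInter fun N hN => h𝒩 N hN F (hF.trans (sInter_subset_of_mem hN))

/-- The closure operator sending a set to the smallest superset closed under `c`. -/
noncomputable def hull {E : Type*} (c : Finset E → Set E) : ClosureOperator (Set E) :=
  .ofCompletePred (ClosedUnder c) fun _ => closedUnder_sInter

section Hull

variable {E : Type*} {c : Finset E → Set E}

lemma closedUnder_hull (A : Set E) : ClosedUnder c (hull c A) := (hull c).isClosed_closure A

lemma hull_subset {A N : Set E} (hA : A ⊆ N) (hN : ClosedUnder c N) : hull c A ⊆ N :=
  (hull c).closure_min hA hN

lemma closedUnder_iUnion {ι : Type*} [Nonempty ι] {N : ι → Set E} (hd : Directed (· ⊆ ·) N)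
    (hN : ∀ i, ClosedUnder c (N i)) : ClosedUnder c (⋃ i, N i) := by
  intro F hF
  obtain ⟨i, hi⟩ := hd.exists_mem_subset_of_finset_subset_biUnion hF
  exact (hN i F hi).trans (subset_iUnion N i)

lemma countable_hull (hc : ∀ F, (c F).Countable) {A : Set E} (hA : A.Countable) :
    (hull c A).Countable := by
  let step : Set E → Set E := fun B => B ∪ ⋃ F ∈ {F : Finset E | ↑F ⊆ B}, c F
  let S : ℕ → Set E := fun n => step^[n] A
  have hS (n : ℕ) : S (n + 1) = step (S n) := Function.iterate_succ_apply' step n A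
  have hmono : Monotone S := monotone_nat_of_le_succ fun n => hS n ▸ subset_union_left
  have hcount (n : ℕ) : (S n).Countable := by
    induction n with
    | zero => exact hA
    | succ n ih =>
      have hfin : {F : Finset E | ↑F ⊆ S n}.Countable :=
        ((countable_ofPred_finite_subset ih).preimage Finset.coe_injective).mono
          fun F hF => And.intro F.finite_toSet hF
      exact hS n ▸ ih.union (hfin.biUnion fun F _ => hc F)
  refine (countable_iUnion hcount).mono (hull_subset (subset_iUnion S 0) fun F hF => ?_)
  obtain ⟨n, hn⟩ := hmono.directed_le.exists_mem_subset_of_finset_subset_biUnion hF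
  calc c F ⊆ step (S n) := (subset_biUnion_of_mem (u := c) hn).trans subset_union_right
    _ = S (n + 1) := (hS n).symm
    _ ⊆ ⋃ n, S n := subset_iUnion S (n + 1)

end Hull

/-! ### Continuous images of Corson compacta -/

section Indicator

variable {Γ V : Type*} [TopologicalSpace V] [Zero V] {S : Set (Γ → V)}

lemma indicator_mem_of_closedUnder (hS : IsClosed S) {c : Finset Γ → Set Γ}
    {Q : Finset Γ → Set (Γ → V)}
    (hQS : ∀ G, Q G ⊆ S) (hQ : ∀ G, G.restrict '' S ⊆ closure (G.restrict '' Q G))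
    (hc : ∀ G, ∀ q ∈ Q G, Function.support q ⊆ c G) {M : Set Γ} (hM : ClosedUnder c M)
    {x : Γ → V} (hx : x ∈ S) : M.indicator x ∈ S := by
  classical
  refine hS.closure_subset (mem_closure_iff.2 fun O hO hxO => ?_)
  obtain ⟨F, U, hU, hUO⟩ := isOpen_pi_iff.1 hO _ hxO
  let G : Finset Γ := F.filter (· ∈ M)
  have hGM : ↑G ⊆ M := fun γ hγ => (Finset.mem_filter.1 hγ).2
  have hGF : G ⊆ F := Finset.filter_subset _ _
  obtain ⟨_, hqU, q, hqQ, rfl⟩ := mem_closure_iff.1 (hQ G (mem_image_of_mem _ hx))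
    (univ.pi fun γ => U γ) (isOpen_set_pi finite_univ fun γ _ => (hU γ (hGF γ.2)).1)
    fun γ _ => by simpa [indicator_of_mem (hGM γ.2)] using (hU γ (hGF γ.2)).2
  refine ⟨q, hUO fun γ hγ => ?_, hQS G hqQ⟩
  by_cases hγM : γ ∈ M
  · exact hqU ⟨γ, Finset.mem_filter.2 ⟨hγ, hγM⟩⟩ trivial
  · have hqγ : q γ = 0 := by
      by_contra h
      exact hγM (hM G hGM (hc G q hqQ h))
    rw [hqγ]
    simpa [hγM] using (hU γ hγ).2

lemma exists_countable_superset_indicator_mem [SecondCountableTopology V] (hS : IsClosed S)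
    (hsupp : ∀ x ∈ S, (Function.support x).Countable) {M₀ : Set Γ} (hM₀ : M₀.Countable) :
    ∃ M ⊇ M₀, M.Countable ∧ ∀ x ∈ S, M.indicator x ∈ S := by
  choose Q hQS hQc hQ using fun G : Finset Γ =>
    exists_countable_image_dense (G.restrict (π := fun _ => V)) S
  let c : Finset Γ → Set Γ := fun G => ⋃ q ∈ Q G, Function.support q
  have hc (G : Finset Γ) : (c G).Countable :=
    (hQc G).biUnion fun q hq => hsupp q (hQS G hq)
  exact ⟨hull c M₀, (hull c).le_closure M₀, countable_hull hc hM₀, fun x hx =>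
    indicator_mem_of_closedUnder hS hQS hQ
      (fun G q hq => subset_biUnion_of_mem (u := Function.support) hq) (closedUnder_hull M₀) hx⟩

lemma tendsto_indicator_iUnion {M : ℕ → Set Γ} (hM : Monotone M) (x : Γ → V) :
    Tendsto (fun n => (M n).indicator x) atTop (𝓝 ((⋃ n, M n).indicator x)) :=
  tendsto_pi_nhds.2 fun γ => (hM.tendsto_indicator M x γ).mono_right (pure_le_nhds _)

end Indicator

/-- Setting to zero the coordinates outside `M` maps the kernel of `φ`, written in the coordinates
`e`, into itself. In particular it maps the range of `e` into itself. -/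
def PreservesKernel {K L Γ : Type*} (e : K → Γ → ℝ) (φ : K → L) (M : Set Γ) : Prop :=
  ∀ x y, φ x = φ y →
    ∃ x' y', φ x' = φ y' ∧ e x' = M.indicator (e x) ∧ e y' = M.indicator (e y)

/-- The kernel of `φ` in the coordinates `e`. -/
def kernelCoords {K L Γ : Type*} (e : K → Γ → ℝ) (φ : K → L) : Set (Γ → ℝ × ℝ) :=
  (fun p γ => (e p.1 γ, e p.2 γ)) '' {p : K × K | φ p.1 = φ p.2}

lemma preservesKernel_iff {K L Γ : Type*} {e : K → Γ → ℝ} {φ : K → L} {M : Set Γ} :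
    PreservesKernel e φ M ↔ ∀ z ∈ kernelCoords e φ, M.indicator z ∈ kernelCoords e φ := by
  have indicator_pair (x y : Γ → ℝ) :
      (M.indicator fun γ => (x γ, y γ)) = fun γ => (M.indicator x γ, M.indicator y γ) := by
    funext γ
    by_cases hγ : γ ∈ M <;> simp [hγ, Prod.zero_eq_mk]
  constructor
  · rintro h _ ⟨⟨x, y⟩, hxy, rfl⟩
    obtain ⟨x', y', h', hx, hy⟩ := h x y hxy
    exact ⟨(x', y'), h', by simp only [hx, hy, indicator_pair]⟩
  · intro h x y hxy
    obtain ⟨⟨x', y'⟩, h', heq⟩ := h _ ⟨(x, y), hxy, rfl⟩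
    rw [indicator_pair] at heq
    exact ⟨x', y', h', funext fun γ => congrArg Prod.fst (congrFun heq γ),
      funext fun γ => congrArg Prod.snd (congrFun heq γ)⟩

section CorsonImage

variable {K L Γ : Type*} [TopologicalSpace K] [CompactSpace K] [TopologicalSpace L] [T2Space L]
  {e : K → Γ → ℝ} {φ : K → L}

lemma isClosed_kernelCoords (he : Continuous e) (hφ : Continuous φ) :
    IsClosed (kernelCoords e φ) :=
  ((isClosed_eq (by fun_prop) (by fun_prop)).isCompact.image (by fun_prop)).isClosed

lemma exists_countable_superset_preservesKernel (he : Continuous e)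
    (hsupp : ∀ x, (Function.support (e x)).Countable) (hφ : Continuous φ) {M₀ : Set Γ}
    (hM₀ : M₀.Countable) : ∃ M ⊇ M₀, M.Countable ∧ PreservesKernel e φ M := by
  simp only [preservesKernel_iff]
  refine exists_countable_superset_indicator_mem (isClosed_kernelCoords he hφ) ?_ hM₀
  rintro _ ⟨p, -, rfl⟩
  refine ((hsupp p.1).union (hsupp p.2)).mono fun γ hγ => ?_
  simpa only [Function.mem_support, ne_eq, Prod.mk_eq_zero, not_and_or, mem_union] using hγ

lemma preservesKernel_iUnion (he : Continuous e) (hφ : Continuous φ) {M : ℕ → Set Γ}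
    (hM : Monotone M) (h : ∀ n, PreservesKernel e φ (M n)) : PreservesKernel e φ (⋃ n, M n) := by
  simp only [preservesKernel_iff] at h ⊢
  exact fun z hz => (isClosed_kernelCoords he hφ).mem_of_tendsto (tendsto_indicator_iUnion hM z)
    (.of_forall fun n => h n z hz)

lemma exists_continuousMap_of_preservesKernel (he : Continuous e) (heinj : Function.Injective e)
    (hφ : Continuous φ) (hsurj : Function.Surjective φ) {M : Set Γ}
    (hM : PreservesKernel e φ M) :
    ∃ (r : C(K, K)) (ρ : C(L, L)),
      (∀ x, e (r x) = M.indicator (e x)) ∧ ∀ x, ρ (φ x) = φ (r x) := by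
  have hemb := (he.isClosedEmbedding heinj).isEmbedding
  choose r hr using fun x => show ∃ x', e x' = M.indicator (e x) from
    let ⟨x', _, _, hx', _⟩ := hM x x rfl; ⟨x', hx'⟩
  have hr_cont : Continuous r := by
    refine hemb.continuous_iff.2 (continuous_pi fun γ => ?_)
    by_cases hγ : γ ∈ M
    · simpa [hr, hγ] using continuous_pi_iff.1 he γ
    · simpa [hr, hγ] using continuous_const
  have hφr (x y : K) (hxy : φ x = φ y) : φ (r x) = φ (r y) := by
    obtain ⟨x', y', h, hx, hy⟩ := hM x y hxy
    rwa [← heinj (hx.trans (hr x).symm), ← heinj (hy.trans (hr y).symm)]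
  have hq : IsQuotientMap (⟨φ, hφ⟩ : C(K, L)) := hφ.isClosedMap.isQuotientMap hφ hsurj
  let φr : C(K, L) := ⟨φ ∘ r, hφ.comp hr_cont⟩
  exact ⟨⟨r, hr_cont⟩, hq.lift φr hφr, hr, DFunLike.congr_fun (hq.lift_comp φr hφr)⟩

lemma metrizableSpace_range_of_indicator [CompactSpace L] (he : Continuous e)
    (heinj : Function.Injective e) (hφ : Continuous φ) (hsurj : Function.Surjective φ)
    {M : Set Γ} (hM : M.Countable) {r : C(K, K)} {ρ : C(L, L)}
    (hr : ∀ x, e (r x) = M.indicator (e x)) (hρ : ∀ x, ρ (φ x) = φ (r x)) :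
    MetrizableSpace (range ρ) := by
  have := hM.to_subtype
  have : CompactSpace (range r) := isCompact_iff_compactSpace.1 (isCompact_range r.continuous)
  have : CompactSpace (range ρ) := isCompact_iff_compactSpace.1 (isCompact_range ρ.continuous)
  have : MetrizableSpace (range r) := by
    refine metrizableSpace_of_countable_separating (f := fun (γ : M) (x : range r) => e x γ)
      (fun γ => by fun_prop) ?_
    rintro ⟨_, x, rfl⟩ ⟨_, y, rfl⟩ hxy
    refine Subtype.ext (heinj (funext fun γ => ?_))
    by_cases hγ : γ ∈ M
    · exact hxy ⟨γ, hγ⟩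
    · simp only [hr, indicator_of_notMem hγ]
  let q : range r → range ρ := fun x => ⟨φ x, by
    obtain ⟨_, y, rfl⟩ := x
    exact ⟨φ y, hρ y⟩⟩
  refine metrizableSpace_of_surjective (f := q) (by fun_prop) ?_
  rintro ⟨_, y, rfl⟩
  obtain ⟨x, rfl⟩ := hsurj y
  exact ⟨⟨r x, x, rfl⟩, Subtype.ext (hρ x).symm⟩

end CorsonImage

section CorsonImageSkeleton

variable {K L Γ : Type u} [TopologicalSpace K] [CompactSpace K] [TopologicalSpace L]
  [CompactSpace L] [T2Space L] {e : K → Γ → ℝ} {φ : K → L}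

lemma hasRetractionalSkeleton_of_countable_support (he : Continuous e)
    (heinj : Function.Injective e) (hsupp : ∀ x, (Function.support (e x)).Countable)
    (hφ : Continuous φ) (hsurj : Function.Surjective φ) : HasRetractionalSkeleton L := by
  let I := {M : Set Γ // M.Countable ∧ PreservesKernel e φ M}
  have exists_ge {M₀ : Set Γ} (hM₀ : M₀.Countable) : ∃ M : I, M₀ ⊆ M.1 :=
    let ⟨M, hle, hM⟩ := exists_countable_superset_preservesKernel he hsupp hφ hM₀
    ⟨⟨M, hM⟩, hle⟩
  choose r ρ hr hρ using fun M : I =>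
    exists_continuousMap_of_preservesKernel he heinj hφ hsurj M.2.2
  have r_r {M N S : I} (h : M.1 ∩ N.1 = S.1) (x : K) : r M (r N x) = r S x :=
    heinj (by simp only [hr, indicator_indicator, h])
  have ρ_ρ {M N S : I} (h : M.1 ∩ N.1 = S.1) (y : L) : ρ M (ρ N y) = ρ S y := by
    obtain ⟨x, rfl⟩ := hsurj y
    simp only [hρ, r_r h]
  have hemb := (he.isClosedEmbedding heinj).isEmbedding
  exact ⟨{
    Γ := I
    ne := ⟨(exists_ge countable_empty).choose⟩
    directed := fun M N => (exists_ge (M.2.1.union N.2.1)).imp fun _ => union_subset_iff.1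
    r := ρ
    isRetraction := fun M => ρ_ρ (inter_self M.1)
    metrizable := fun M => metrizableSpace_range_of_indicator he heinj hφ hsurj M.2.1 (hr M) (hρ M)
    tendsto_id := fun y => by
      obtain ⟨x, rfl⟩ := hsurj y
      obtain ⟨M₀, hM₀⟩ := exists_ge (hsupp x)
      simp only [hρ]
      refine (hφ.tendsto x).comp (tendsto_const_nhds.congr' ?_)
      filter_upwards [eventually_ge_atTop M₀] with M hM
      exact heinj ((hr M x).trans (indicator_eq_self.2 (hM₀.trans hM))).symm
    comp_eq_of_le := fun M N h y =>
      ⟨ρ_ρ (inter_eq_left.2 h) y, ρ_ρ (inter_eq_right.2 h) y⟩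
    sup_seq := fun f hf => by
      have hmono : Monotone fun n => (f n).1 := hf.monotone
      let M : I := ⟨⋃ n, (f n).1, countable_iUnion fun n => (f n).2.1,
        preservesKernel_iUnion he hφ hmono fun n => (f n).2.2⟩
      refine ⟨M, ⟨forall_mem_range.2 fun n => subset_iUnion (fun n => (f n).1) n,
        fun N hN => iUnion_subset fun n => hN (mem_range_self n)⟩, fun y => ?_⟩
      obtain ⟨x, rfl⟩ := hsurj y
      simp only [hρ]
      refine (hφ.tendsto (r M x)).comp (hemb.tendsto_nhds_iff.2 ?_)
      simpa only [Function.comp_def, hr] using tendsto_indicator_iUnion hmono (e x) }⟩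

end CorsonImageSkeleton

theorem hasRetractionalSkeleton_of_isCorsonCompact {K L : Type u} [TopologicalSpace K]
    [TopologicalSpace L] [CompactSpace L] [T2Space L] (hK : IsCorsonCompact K) {φ : K → L}
    (hφ : Continuous φ) (hsurj : Function.Surjective φ) : HasRetractionalSkeleton L := by
  obtain ⟨Γ, A, hA, hsupp, ⟨h⟩⟩ := hK
  have := isCompact_iff_compactSpace.1 hA
  have := h.symm.compactSpace
  exact hasRetractionalSkeleton_of_countable_support (e := fun x => (h x : Γ → ℝ)) (by fun_prop)
    (Subtype.val_injective.comp h.injective) (fun x => hsupp _ (h x).2) hφ hsurj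

/-! ### Corson compacta inside induced sets -/

/-- Every point of the closure of a set lies in the closure of a countable subset. -/
def CountablyTight (X : Type*) [TopologicalSpace X] : Prop :=
  ∀ (A : Set X) (x : X), x ∈ closure A → ∃ A' ⊆ A, A'.Countable ∧ x ∈ closure A'

/-- The maps `q F` with `F ⊆ A`, combined into a single map. -/
def coords {X : Type*} [TopologicalSpace X] (q : Finset X → C(X, ℕ → ℝ)) (A : Set X) (x : X) :
    {F : Finset X // ↑F ⊆ A} → ℕ → ℝ :=
  fun F => q F x

section Coords

variable {X : Type*} [TopologicalSpace X] {q : Finset X → C(X, ℕ → ℝ)} {A B : Set X} {x y : X}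

@[fun_prop]
lemma continuous_coords : Continuous (coords q A) :=
  continuous_pi fun F => (q F).continuous

lemma coords_eq_iff : coords q A x = coords q A y ↔ ∀ F : Finset X, ↑F ⊆ A → q F x = q F y := by
  simp only [funext_iff (f := coords q A x), coords, Subtype.forall]

lemma coords_eq_of_subset (hAB : A ⊆ B) (h : coords q B x = coords q B y) :
    coords q A x = coords q A y :=
  coords_eq_iff.2 fun F hF => coords_eq_iff.1 h F (hF.trans hAB)

lemma coords_iUnion_eq_iff {ι : Type*} [Nonempty ι] {A : ι → Set X} (hA : Directed (· ⊆ ·) A) :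
    coords q (⋃ i, A i) x = coords q (⋃ i, A i) y ↔
      ∀ i, coords q (A i) x = coords q (A i) y := by
  refine ⟨fun h i => coords_eq_of_subset (subset_iUnion A i) h, fun h => coords_eq_iff.2 ?_⟩
  intro F hF
  obtain ⟨i, hi⟩ := hA.exists_mem_subset_of_finset_subset_biUnion hF
  exact coords_eq_iff.1 (h i) F hi

end Coords

/-- Finer and finer maps `q F`, indexed by the finite sets of points, such that the maps `q F` with
`F ⊆ A` separate the points of `closure A`. -/
structure IsSeparatingSystem {X : Type*} [TopologicalSpace X] (q : Finset X → C(X, ℕ → ℝ)) :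
    Prop where
  mono : ∀ F G, F ⊆ G → ∀ x y, q G x = q G y → q F x = q F y
  injOn : ∀ A, InjOn (coords q A) (closure A)

/-- A countable set of points on which the map `q F` takes a dense set of its values. -/
noncomputable def denseSection {X : Type*} [TopologicalSpace X] (q : Finset X → C(X, ℕ → ℝ))
    (F : Finset X) : Set X :=
  (exists_countable_image_dense (q F) univ).choose

section DenseSection

variable {X : Type*} [TopologicalSpace X] (q : Finset X → C(X, ℕ → ℝ)) (F : Finset X)

lemma countable_denseSection : (denseSection q F).Countable :=
  (exists_countable_image_dense (q F) univ).choose_spec.2.1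

lemma map_mem_closure_image_denseSection (x : X) : q F x ∈ closure (q F '' denseSection q F) :=
  (exists_countable_image_dense (q F) univ).choose_spec.2.2 (mem_image_of_mem _ (mem_univ x))

end DenseSection

namespace IsSeparatingSystem

variable {X : Type*} [TopologicalSpace X] [CompactSpace X] {q : Finset X → C(X, ℕ → ℝ)}

lemma exists_mem_closure_coords_eq (hq : IsSeparatingSystem q) {A : Set X}
    (hA : ClosedUnder (denseSection q) A) (x : X) :
    ∃ y ∈ closure A, coords q A y = coords q A x := by
  classical
  have : Nonempty {F : Finset X // ↑F ⊆ A} := ⟨∅, by simp⟩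
  let Z : {F : Finset X // ↑F ⊆ A} → Set X := fun F => closure A ∩ {y | q F y = q F x}
  have hZ (F) : IsClosed (Z F) :=
    isClosed_closure.inter (isClosed_eq (q F).continuous continuous_const)
  have hZ_dir : Directed (· ⊇ ·) Z := fun F G =>
    ⟨⟨F ∪ G, by simpa only [Finset.coe_union] using union_subset F.2 G.2⟩,
      fun y hy => ⟨hy.1, hq.mono _ _ Finset.subset_union_left _ _ hy.2⟩,
      fun y hy => ⟨hy.1, hq.mono _ _ Finset.subset_union_right _ _ hy.2⟩⟩
  have hZ_ne (F) : (Z F).Nonempty := by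
    have himage : closure (q F '' denseSection q F) ⊆ q F '' closure A :=
      closure_minimal (image_mono ((hA F F.2).trans subset_closure))
        (isClosed_closure.isCompact.image (q F).continuous).isClosed
    exact himage (map_mem_closure_image_denseSection q F x)
  obtain ⟨y, hy⟩ := IsCompact.nonempty_iInter_of_directed_nonempty_isCompact_isClosed Z hZ_dir
    hZ_ne (fun F => (hZ F).isCompact) hZ
  rw [mem_iInter] at hy
  exact ⟨y, (hy (Classical.arbitrary _)).1, coords_eq_iff.2 fun F hF => (hy ⟨F, hF⟩).2⟩

lemma exists_retraction (hq : IsSeparatingSystem q) {A : Set X}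
    (hA : ClosedUnder (denseSection q) A) :
    ∃ r : C(X, X), ∀ x, r x ∈ closure A ∧ coords q A (r x) = coords q A x := by
  choose r hr_mem hr using hq.exists_mem_closure_coords_eq hA
  have : CompactSpace (closure A) := isCompact_iff_compactSpace.1 isClosed_closure.isCompact
  have hemb : IsClosedEmbedding fun y : closure A => coords q A y :=
    Continuous.isClosedEmbedding (by fun_prop) (hq.injOn A).injective
  have hcont : Continuous fun x => (⟨r x, hr_mem x⟩ : closure A) := by
    simp only [hemb.isEmbedding.continuous_iff, Function.comp_def, hr, continuous_coords]
  exact ⟨⟨r, continuous_subtype_val.comp hcont⟩, fun x => ⟨hr_mem x, hr x⟩⟩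

variable (hq : IsSeparatingSystem q)

/-- The retraction of `X` onto the closure of the hull of `B`. -/
noncomputable def retraction (B : Set X) : C(X, X) :=
  (hq.exists_retraction (closedUnder_hull B)).choose

lemma retraction_mem (B : Set X) (x : X) :
    hq.retraction B x ∈ closure (hull (denseSection q) B) :=
  ((hq.exists_retraction (closedUnder_hull B)).choose_spec x).1

lemma coords_retraction (B : Set X) (x : X) :
    coords q (hull (denseSection q) B) (hq.retraction B x) =
      coords q (hull (denseSection q) B) x :=
  ((hq.exists_retraction (closedUnder_hull B)).choose_spec x).2

lemma retraction_eq_iff {B : Set X} {x y : X} : hq.retraction B x = hq.retraction B y ↔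
    coords q (hull (denseSection q) B) x = coords q (hull (denseSection q) B) y := by
  rw [← hq.coords_retraction B x, ← hq.coords_retraction B y]
  exact ((hq.injOn _).eq_iff (hq.retraction_mem B x) (hq.retraction_mem B y)).symm

lemma retraction_eq_self {B : Set X} {x : X} (hx : x ∈ closure (hull (denseSection q) B)) :
    hq.retraction B x = x :=
  hq.injOn _ (hq.retraction_mem B x) hx (hq.coords_retraction B x)

lemma retraction_eq_of_subset {A B : Set X} (hAB : A ⊆ B) {x y : X}
    (h : hq.retraction B x = hq.retraction B y) : hq.retraction A x = hq.retraction A y :=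
  hq.retraction_eq_iff.2 (coords_eq_of_subset ((hull _).monotone hAB) (hq.retraction_eq_iff.1 h))

lemma retraction_retraction_of_subset {A B : Set X} (hAB : A ⊆ B) (x : X) :
    hq.retraction A (hq.retraction B x) = hq.retraction A x :=
  hq.retraction_eq_of_subset hAB (hq.retraction_eq_self (hq.retraction_mem B x))

lemma retraction_retraction_of_superset {A B : Set X} (hAB : A ⊆ B) (x : X) :
    hq.retraction B (hq.retraction A x) = hq.retraction A x :=
  hq.retraction_eq_self (closure_mono ((hull _).monotone hAB) (hq.retraction_mem A x))

end IsSeparatingSystem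

lemma exists_isLowerSet_not_countable_inter {ι : Type*} [LinearOrder ι] [WellFoundedLT ι]
    {J : Set ι} (hJ : ¬ J.Countable) :
    ∃ I, IsLowerSet I ∧ ¬ (J ∩ I).Countable ∧ ∀ b ∈ I, (J ∩ Iio b).Countable := by
  by_cases hex : ∃ b, ¬ (J ∩ Iio b).Countable
  · obtain ⟨b, hb, hmin⟩ := (wellFounded_lt (α := ι)).has_min {b | ¬ (J ∩ Iio b).Countable} hex
    exact ⟨Iio b, isLowerSet_Iio b, hb, fun d hd => of_not_not fun h => hmin d h hd⟩
  · push Not at hex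
    exact ⟨univ, isLowerSet_univ, by rwa [inter_univ], fun b _ => hex b⟩

lemma exists_gt_of_countable {ι : Type*} [LinearOrder ι] {I J D : Set ι}
    (hI : ¬ (J ∩ I).Countable) (hIb : ∀ b ∈ I, (J ∩ Iio b).Countable) (hD : D.Countable)
    (hDI : D ⊆ I) : ∃ i ∈ I, ∀ b ∈ D, b < i := by
  by_contra! hcof
  refine hI ((hD.biUnion fun b hb => (hIb b (hDI hb)).union (countable_singleton b)).mono ?_)
  rintro j ⟨hjJ, hjI⟩
  obtain ⟨b, hb, hjb⟩ := hcof j hjI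
  exact mem_biUnion hb (hjb.lt_or_eq.imp (fun h => ⟨hjJ, h⟩) id)

lemma hull_image_eq_iUnion {E ι : Type*} {c : Finset E → Set E} [LinearOrder ι] (e : ι → E)
    {I : Set ι} (hI : IsLowerSet I) (hne : I.Nonempty) :
    hull c (e '' I) = ⋃ i : I, hull c (e '' Iic i.1) := by
  have := hne.to_subtype
  have hmono : Monotone fun i : I => hull c (e '' Iic i.1) := fun i j hij =>
    (hull c).monotone (image_mono (Iic_subset_Iic.2 hij))
  refine Subset.antisymm (hull_subset ?_ (closedUnder_iUnion hmono.directed_le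
    fun i => closedUnder_hull _)) (iUnion_subset fun i => (hull c).monotone (image_mono ?_))
  · rintro _ ⟨i, hi, rfl⟩
    exact mem_iUnion.2 ⟨⟨i, hi⟩, (hull c).le_closure _ (mem_image_of_mem e self_mem_Iic)⟩
  · exact hI.Iic_subset i.2

namespace IsSeparatingSystem

variable {X : Type*} [TopologicalSpace X] [CompactSpace X] {q : Finset X → C(X, ℕ → ℝ)}
  (hq : IsSeparatingSystem q) {ι : Type*} [LinearOrder ι] (e : ι → X) {I : Set ι}

lemma retraction_image_eq_of_forall_Iic (hI : IsLowerSet I) {x y : X}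
    (h₀ : hq.retraction ∅ x = hq.retraction ∅ y)
    (h : ∀ i ∈ I, hq.retraction (e '' Iic i) x = hq.retraction (e '' Iic i) y) :
    hq.retraction (e '' I) x = hq.retraction (e '' I) y := by
  rcases I.eq_empty_or_nonempty with rfl | hne
  · simpa only [image_empty] using h₀
  have := hne.to_subtype
  have hmono : Monotone fun i : I => hull (denseSection q) (e '' Iic i.1) := fun i j hij =>
    (hull _).monotone (image_mono (Iic_subset_Iic.2 hij))
  rw [hq.retraction_eq_iff, hull_image_eq_iUnion e hI hne, coords_iUnion_eq_iff hmono.directed_le]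
  exact fun i => hq.retraction_eq_iff.1 (h i i.2)

lemma retraction_image_eq_of_mem_closure {S : Set ι} {i : ι} {x : X} (hSI : S ⊆ I) (hiS : Iio i ⊆ S)
    (hx : hq.retraction (e '' I) x ∈ closure (hull (denseSection q) (e '' Iio i))) :
    hq.retraction (e '' S) x = hq.retraction (e '' I) x := by
  rw [← hq.retraction_retraction_of_subset (image_mono hSI) x]
  exact hq.retraction_eq_self (closure_mono ((hull _).monotone (image_mono hiS)) hx)

lemma countable_retraction_Iic_ne_Iio [WellFoundedLT ι] (hX : CountablyTight X) (x : X) :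
    {i | hq.retraction (e '' Iic i) x ≠ hq.retraction (e '' Iio i) x}.Countable := by
  by_contra hunc
  obtain ⟨I, hI, hI_unc, hI_min⟩ := exists_isLowerSet_not_countable_inter hunc
  have hne : I.Nonempty := by
    by_contra! rfl
    exact hI_unc (by simp)
  obtain ⟨Q, hQ, hQc, hxQ⟩ := hX _ _ (hq.retraction_mem (e '' I) x)
  rw [hull_image_eq_iUnion e hI hne] at hQ
  choose b hb using fun a : Q => mem_iUnion.1 (hQ a.2)
  have := hQc.to_subtype
  obtain ⟨i, hiI, hi⟩ := exists_gt_of_countable hI_unc hI_min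
    (countable_range fun a => (b a : ι)) (range_subset_iff.2 fun a => (b a).2)
  rw [forall_mem_range] at hi
  have hxi : hq.retraction (e '' I) x ∈ closure (hull (denseSection q) (e '' Iio i)) :=
    closure_mono (fun a ha =>
      (hull _).monotone (image_mono (Iic_subset_Iio.2 (hi ⟨a, ha⟩))) (hb ⟨a, ha⟩)) hxQ
  refine hI_unc ((hI_min i hiI).mono ?_)
  rintro j ⟨hj, hjI⟩
  refine ⟨hj, lt_of_not_ge fun hij => hj ?_⟩
  rw [hq.retraction_image_eq_of_mem_closure e (hI.Iic_subset hjI)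
      (Iio_subset_Iic_self.trans (Iic_subset_Iic.2 hij)) hxi,
    hq.retraction_image_eq_of_mem_closure e (Iio_subset_Iic_self.trans (hI.Iic_subset hjI))
      (Iio_subset_Iio hij) hxi]

/-- The kernel of the retraction determined by `B` is the kernel of a family of continuous functions
of which only countably many are nonzero at any given point. -/
def HasPointCountableFamily (B : Set X) : Prop :=
  ∃ 𝓕 : Set C(X, ℝ), (∀ x y, (∀ f ∈ 𝓕, f x = f y) ↔ hq.retraction B x = hq.retraction B y) ∧
    ∀ x, {f ∈ 𝓕 | f x ≠ 0}.Countable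

lemma hasPointCountableFamily_of_countable {B : Set X} (hB : B.Countable) :
    hq.HasPointCountableFamily B := by
  let N := hull (denseSection q) B
  have : Countable {F : Finset X // ↑F ⊆ N} :=
    (((countable_ofPred_finite_subset (countable_hull (countable_denseSection q) hB)).preimage
      Finset.coe_injective).mono fun F hF => And.intro F.finite_toSet hF).to_subtype
  refine ⟨range fun p : {F : Finset X // ↑F ⊆ N} × ℕ => (ContinuousMap.eval p.2).comp (q p.1),
    fun x y => ?_, fun x => (countable_range _).mono fun f hf => hf.1⟩
  simp only [forall_mem_range, Prod.forall, Subtype.forall, hq.retraction_eq_iff, funext_iff]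
  rfl

lemma forall_sub_comp_retraction_eq_iff [WellFoundedLT ι] {𝓕₀ : Set C(X, ℝ)}
    {𝓕 : ι → Set C(X, ℝ)}
    (h₀ : ∀ x y, (∀ f ∈ 𝓕₀, f x = f y) ↔ hq.retraction ∅ x = hq.retraction ∅ y)
    (h : ∀ i x y, (∀ f ∈ 𝓕 i, f x = f y) ↔
      hq.retraction (e '' Iic i) x = hq.retraction (e '' Iic i) y) (x y : X) :
    (∀ f ∈ 𝓕₀ ∪ ⋃ i, (fun f : C(X, ℝ) => f - f.comp (hq.retraction (e '' Iio i))) '' 𝓕 i,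
      f x = f y) ↔ hq.retraction (range e) x = hq.retraction (range e) y := by
  constructor
  · intro hxy
    have hx₀ := (h₀ x y).1 fun f hf => hxy f (.inl hf)
    rw [← image_univ]
    refine hq.retraction_image_eq_of_forall_Iic e isLowerSet_univ hx₀ fun i _ => ?_
    induction i using WellFoundedLT.induction with
    | ind i ih =>
      have hlt : hq.retraction (e '' Iio i) x = hq.retraction (e '' Iio i) y :=
        hq.retraction_image_eq_of_forall_Iic e (isLowerSet_Iio i) hx₀ fun j hj => ih j hj trivial
      refine (h i x y).1 fun f hf => ?_
      simpa [hlt] using hxy _ (.inr (mem_iUnion.2 ⟨i, f, hf, rfl⟩))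
  · rintro hxy f (hf | hf)
    · exact (h₀ x y).2 (hq.retraction_eq_of_subset (empty_subset _) hxy) f hf
    · obtain ⟨i, g, hg, rfl⟩ := mem_iUnion.1 hf
      have hle := (h i x y).2 (hq.retraction_eq_of_subset (image_subset_range _ _) hxy) g hg
      have hlt := hq.retraction_eq_of_subset (image_subset_range e (Iio i)) hxy
      simp only [ContinuousMap.sub_apply, ContinuousMap.comp_apply, hle, hlt]

lemma hasPointCountableFamily_range [WellFoundedLT ι] (hX : CountablyTight X)
    (h : ∀ i, hq.HasPointCountableFamily (e '' Iic i)) :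
    hq.HasPointCountableFamily (range e) := by
  obtain ⟨𝓕₀, h₀, h₀c⟩ := hq.hasPointCountableFamily_of_countable countable_empty
  choose 𝓕 h𝓕 h𝓕c using h
  refine ⟨_, hq.forall_sub_comp_retraction_eq_iff e h₀ h𝓕, fun x => ?_⟩
  let ρ := fun i => hq.retraction (e '' Iio i)
  refine ((h₀c x).union ((hq.countable_retraction_Iic_ne_Iio e hX x).biUnion fun i _ =>
    ((h𝓕c i x).union (h𝓕c i (ρ i x))).image fun f : C(X, ℝ) => f - f.comp (ρ i))).mono ?_
  rintro f ⟨hf | hf, hfx⟩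
  · exact .inl ⟨hf, hfx⟩
  obtain ⟨i, g, hg, rfl⟩ := mem_iUnion.1 hf
  have hne : g x ≠ g (ρ i x) := fun heq => hfx (sub_eq_zero.2 heq)
  refine .inr (mem_iUnion₂.2 ⟨i, fun heq => hne ?_, g, ?_, rfl⟩)
  · refine (h𝓕 i x (ρ i x)).2 ?_ g hg
    rw [heq, hq.retraction_retraction_of_superset (image_mono Iio_subset_Iic_self)]
  · by_contra! hcon
    simp only [mem_union, mem_ofPred_eq, hg, true_and, not_or, not_not] at hcon
    exact hne (hcon.1.trans hcon.2.symm)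

lemma hasPointCountableFamily (hX : CountablyTight X) (B : Set X) :
    hq.HasPointCountableFamily B := by
  induction hκ : Cardinal.mk B using WellFoundedLT.induction generalizing B with
  | ind κ ih =>
    by_cases hB : B.Countable
    · exact hq.hasPointCountableFamily_of_countable hB
    have hκ₀ : Cardinal.aleph0 ≤ κ :=
      hκ ▸ (not_le.1 (Cardinal.le_aleph0_iff_set_countable.not.2 hB)).le
    obtain ⟨e⟩ := Cardinal.eq.1 ((Cardinal.mk_ord_toType κ).trans hκ.symm)
    have he : range (fun i => (e i : X)) = B := by
      rw [range_comp' Subtype.val e, e.range_eq_univ, image_univ, Subtype.range_coe]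
    rw [← he]
    refine hq.hasPointCountableFamily_range _ hX fun i => ih _ ?_ _ rfl
    have hIio : Cardinal.mk (Iio i) < κ := by simpa using Cardinal.mk_Iio_lt i
    calc Cardinal.mk ((fun i => (e i : X)) '' Iic i) ≤ Cardinal.mk (Iic i) := Cardinal.mk_image_le
      _ ≤ Cardinal.mk (Iio i) + 1 := by rw [← Iio_insert]; exact Cardinal.mk_insert_le
      _ < κ := Cardinal.add_lt_of_lt hκ₀ hIio (Cardinal.one_lt_aleph0.trans_le hκ₀)

end IsSeparatingSystem

lemma IsSeparatingSystem.isCorsonCompact {X : Type u} [TopologicalSpace X] [CompactSpace X]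
    {q : Finset X → C(X, ℕ → ℝ)} (hq : IsSeparatingSystem q) (hX : CountablyTight X) :
    IsCorsonCompact X := by
  obtain ⟨𝓕, h𝓕, h𝓕c⟩ := hq.hasPointCountableFamily hX univ
  have retraction_univ (x : X) : hq.retraction univ x = x :=
    hq.retraction_eq_self (subset_closure ((hull _).le_closure univ (mem_univ x)))
  let e : X → 𝓕 → ℝ := fun x f => f.1 x
  have he : Continuous e := by fun_prop
  have heinj : Function.Injective e := fun x y hxy => by
    simpa only [retraction_univ] using (h𝓕 x y).1 fun f hf => congrFun hxy ⟨f, hf⟩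
  refine ⟨𝓕, range e, isCompact_range he, ?_,
    ⟨(he.isClosedEmbedding heinj).isEmbedding.toHomeomorph⟩⟩
  rintro _ ⟨x, rfl⟩
  exact ((h𝓕c x).preimage Subtype.val_injective).mono fun f hf => And.intro f.2 hf

section InducedSet

variable {X P : Type u} [TopologicalSpace X] [TopologicalSpace P] [T2Space P]
  (𝔰 : RetractionalSkeleton P) {ι : X → P}

lemma countablyTight_of_mem_inducedSet [CompactSpace P] (hι : IsClosedEmbedding ι)
    (hD : ∀ x, ι x ∈ 𝔰.inducedSet) :
    CountablyTight X := by
  intro A x hx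
  obtain ⟨B, hBA, hBc, hxB⟩ := 𝔰.exists_countable_subset_mem_closure
    (image_subset_iff.2 fun a _ => hD a) (hD x)
    (image_closure_subset_closure_image hι.continuous (mem_image_of_mem ι hx))
  obtain ⟨A', hA', rfl⟩ := subset_image_iff.1 hBA
  refine ⟨A', hA', countable_of_injective_of_countable_image hι.injective.injOn hBc, ?_⟩
  rwa [hι.isEmbedding.closure_eq_preimage_closure_image]

lemma exists_continuousMap_eq_iff_r_eq [CompactSpace P] (hι : Continuous ι) (s : 𝔰.Γ) :
    ∃ p : C(X, ℕ → ℝ), ∀ x y, p x = p y ↔ 𝔰.r s (ι x) = 𝔰.r s (ι y) := by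
  have := 𝔰.metrizable s
  have : CompactSpace (range (𝔰.r s)) :=
    isCompact_iff_compactSpace.1 (isCompact_range (𝔰.r s).continuous)
  obtain ⟨u, hu⟩ := exists_continuousMap_seq_separating (range (𝔰.r s))
  let v : X → range (𝔰.r s) := rangeFactorization (𝔰.r s) ∘ ι
  refine ⟨⟨fun x n => u n (v x), by fun_prop⟩, fun x y => ⟨fun h => ?_, fun h => ?_⟩⟩
  · exact congrArg Subtype.val (hu (v x) (v y) (congrFun h))
  · have hv : v x = v y := Subtype.ext h
    simp only [ContinuousMap.coe_mk, hv]

lemma injOn_coords_of_countable (hι : Continuous ι) (hinj : Function.Injective ι)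
    {σ : Finset X → 𝔰.Γ} (hσ : Monotone σ) (hfix : ∀ F, ∀ x ∈ F, 𝔰.r (σ F) (ι x) = ι x)
    {q : Finset X → C(X, ℕ → ℝ)}
    (hq : ∀ F x y, q F x = q F y ↔ 𝔰.r (σ F) (ι x) = 𝔰.r (σ F) (ι y)) {A : Set X}
    (hA : A.Countable) : InjOn (coords q A) (closure A) := by
  classical
  intro x hx y hy hxy
  obtain ⟨a, rfl⟩ := hA.exists_eq_range (closure_nonempty_iff.1 ⟨x, hx⟩)
  let F : ℕ → Finset X := fun n => (Finset.range n).image a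
  have hF : Monotone F := fun m n hmn => Finset.image_mono a (Finset.range_mono hmn)
  have hFA (n : ℕ) : ↑(F n) ⊆ range a := by
    simpa only [F, Finset.coe_image] using image_subset_range a _
  obtain ⟨t, ht, hlim⟩ := 𝔰.exists_isLUB_tendsto (hσ.comp hF)
  have ht_fix {z : X} (hz : z ∈ closure (range a)) : 𝔰.r t (ι z) = ι z := by
    refine 𝔰.r_eq_self_of_mem_closure ?_
      (image_closure_subset_closure_image hι (mem_image_of_mem ι hz))
    rintro _ ⟨_, ⟨n, rfl⟩, rfl⟩
    exact 𝔰.r_eq_self_of_le (ht.1 (mem_range_self (n + 1))) (hfix _ _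
      (Finset.mem_image_of_mem a (Finset.self_mem_range_succ n)))
  have heq : 𝔰.r t (ι x) = 𝔰.r t (ι y) := tendsto_nhds_unique (hlim _)
    ((hlim _).congr fun n => ((hq (F n) x y).1 (coords_eq_iff.1 hxy _ (hFA n))).symm)
  rw [ht_fix hx, ht_fix hy] at heq
  exact hinj heq

theorem isCorsonCompact_of_mem_inducedSet [CompactSpace X] [CompactSpace P] (hι : Continuous ι)
    (hinj : Function.Injective ι) (hD : ∀ x, ι x ∈ 𝔰.inducedSet) : IsCorsonCompact X := by
  classical
  have hX := countablyTight_of_mem_inducedSet 𝔰 (hι.isClosedEmbedding hinj) hD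
  choose s hs using fun x => 𝔰.mem_inducedSet_iff.1 (hD x)
  choose b hb using fun F : Finset X => (F.image s).exists_le
  obtain ⟨σ, hσ, hbσ⟩ := exists_monotone_ge b
  have hfix (F : Finset X) (x : X) (hx : x ∈ F) : 𝔰.r (σ F) (ι x) = ι x :=
    𝔰.r_eq_self_of_le ((hb F _ (Finset.mem_image_of_mem s hx)).trans (hbσ F)) (hs x)
  choose q hq using fun F : Finset X => exists_continuousMap_eq_iff_r_eq 𝔰 hι (σ F)
  have hsep : IsSeparatingSystem q :=
    { mono := fun F G hFG x y h => (hq F x y).2 <| by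
        rw [← (𝔰.comp_eq_of_le _ _ (hσ hFG) (ι x)).1, (hq G x y).1 h,
          (𝔰.comp_eq_of_le _ _ (hσ hFG) (ι y)).1]
      injOn := fun A x hx y hy hxy => by
        obtain ⟨B, hB, hBc, hxB⟩ := hX A x hx
        obtain ⟨C, hC, hCc, hyC⟩ := hX A y hy
        exact injOn_coords_of_countable 𝔰 hι hinj hσ hfix hq (hBc.union hCc)
          (closure_mono subset_union_left hxB) (closure_mono subset_union_right hyC)
          (coords_eq_of_subset (union_subset hB hC) hxy) }
  exact hsep.isCorsonCompact hX

end InducedSet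

/-! ### Retractional skeletons dual to projectional skeletons -/

attribute [instance] ProjectionalSkeleton.po ProjectionalSkeleton.ne

section Adjoint

variable {X : Type u} [NormedAddCommGroup X] [NormedSpace ℝ X]

lemma isCompact_dualBall : IsCompact (dualBall X) := by
  have h : dualBall X = WeakDual.toStrongDual ⁻¹' Metric.closedBall (0 : StrongDual ℝ X) 1 := by
    ext φ
    rw [mem_preimage, mem_closedBall_zero_iff, ContinuousLinearMap.opNorm_le_iff zero_le_one]
    simp [dualBall]
  exact h ▸ WeakDual.isCompact_closedBall _ _

/-- The adjoint `φ ↦ φ ∘ P` of a bounded operator `P`, as a map of the weak* dual. -/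
noncomputable def adjointMap (P : X →L[ℝ] X) (φ : WeakDual ℝ X) : WeakDual ℝ X :=
  StrongDual.toWeakDual ((WeakDual.toStrongDual φ).comp P)

@[simp] lemma adjointMap_apply (P : X →L[ℝ] X) (φ : WeakDual ℝ X) (x : X) :
    adjointMap P φ x = φ (P x) := rfl

lemma continuous_adjointMap (P : X →L[ℝ] X) : Continuous (adjointMap P) :=
  WeakDual.continuous_of_continuous_eval fun x => WeakDual.eval_continuous (P x)

lemma adjointMap_mem_dualBall {P : X →L[ℝ] X} (hP : ‖P‖ ≤ 1) {φ : WeakDual ℝ X}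
    (hφ : φ ∈ dualBall X) : adjointMap P φ ∈ dualBall X := fun x =>
  (hφ (P x)).trans (by simpa using P.le_of_opNorm_le hP x)

/-- The restriction of the adjoint of `P` to a set of functionals invariant under it. -/
noncomputable def adjointOn (P : X →L[ℝ] X) {S : Set (WeakDual ℝ X)}
    (hS : MapsTo (adjointMap P) S S) : C(S, S) :=
  ⟨hS.restrict _ _ _, (continuous_adjointMap P).restrict hS⟩

@[simp] lemma adjointOn_apply (P : X →L[ℝ] X) {S : Set (WeakDual ℝ X)}
    (hS : MapsTo (adjointMap P) S S) (φ : S) (x : X) : (adjointOn P hS φ).1 x = φ.1 (P x) := rfl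

lemma metrizableSpace_range_adjointOn {P : X →L[ℝ] X} (hP : ∀ x, P (P x) = P x)
    (hsep : IsSeparable (range P)) {S : Set (WeakDual ℝ X)} [CompactSpace S]
    (hS : MapsTo (adjointMap P) S S) : MetrizableSpace (range (adjointOn P hS)) := by
  obtain ⟨D, -, hDc, hD⟩ := hsep.exists_countable_dense_subset
  have := hDc.to_subtype
  have : CompactSpace (range (adjointOn P hS)) :=
    isCompact_iff_compactSpace.1 (isCompact_range (adjointOn P hS).continuous)
  refine metrizableSpace_of_countable_separating
    (f := fun (d : D) (φ : range (adjointOn P hS)) => φ.1.1 d.1)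
    (fun d => (WeakDual.eval_continuous d.1).comp
      (continuous_subtype_val.comp continuous_subtype_val)) ?_
  rintro ⟨_, φ, rfl⟩ ⟨_, ψ, rfl⟩ h
  refine Subtype.ext (Subtype.ext (DFunLike.ext _ _ fun x => ?_))
  have hEq : EqOn (adjointOn P hS φ).1 (adjointOn P hS ψ).1 (closure D) :=
    EqOn.closure (fun d hd => h ⟨d, hd⟩)
      (WeakDual.toStrongDual (adjointOn P hS φ).1).continuous
      (WeakDual.toStrongDual (adjointOn P hS ψ).1).continuous
  simpa only [adjointOn_apply, hP] using hEq (hD (mem_range_self x))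

lemma tendsto_subtype_weakDual_iff {α : Type*} {l : Filter α} {S : Set (WeakDual ℝ X)}
    {g : α → S} {φ : S} :
    Tendsto g l (𝓝 φ) ↔ ∀ x, Tendsto (fun a => (g a).1 x) l (𝓝 (φ.1 x)) :=
  tendsto_subtype_rng.trans tendsto_iff_forall_eval_tendsto_topDualPairing

namespace ProjectionalSkeleton

variable (𝔰 : ProjectionalSkeleton X)

lemma P_eq_self_of_le {s t : 𝔰.Γ} (hst : s ≤ t) {x : X} (hx : x ∈ range (𝔰.P s)) :
    𝔰.P t x = x := by
  obtain ⟨y, rfl⟩ := hx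
  exact (𝔰.comp_eq_of_le s t hst y).2

lemma tendsto_of_isLUB (h1 : ∀ s, ‖𝔰.P s‖ ≤ 1) {f : ℕ → 𝔰.Γ} (hf : Monotone f) {t : 𝔰.Γ}
    (ht : IsLUB (range f) t) (hcl : range (𝔰.P t) = closure (⋃ n, range (𝔰.P (f n)))) (x : X) :
    Tendsto (fun n => 𝔰.P (f n) x) atTop (𝓝 (𝔰.P t x)) := by
  rw [Metric.tendsto_atTop]
  intro ε hε
  have hx : 𝔰.P t x ∈ closure (⋃ n, range (𝔰.P (f n))) := hcl ▸ mem_range_self x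
  obtain ⟨y, hy, hd⟩ := Metric.mem_closure_iff.1 hx (ε / 2) (half_pos hε)
  obtain ⟨m, hym⟩ := mem_iUnion.1 hy
  refine ⟨m, fun n hn => ?_⟩
  have hbound : ‖𝔰.P (f n) (𝔰.P t x - y)‖ ≤ ‖𝔰.P t x - y‖ := by
    simpa using (𝔰.P (f n)).le_of_opNorm_le (h1 _) (𝔰.P t x - y)
  rw [map_sub, (𝔰.comp_eq_of_le _ _ (ht.1 (mem_range_self n)) x).1,
    𝔰.P_eq_self_of_le (hf hn) hym] at hbound
  rw [dist_eq_norm] at hd ⊢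
  calc ‖𝔰.P (f n) x - 𝔰.P t x‖ = ‖(𝔰.P (f n) x - y) - (𝔰.P t x - y)‖ := by
        rw [sub_sub_sub_cancel_right]
    _ ≤ ‖𝔰.P (f n) x - y‖ + ‖𝔰.P t x - y‖ := norm_sub_le _ _
    _ < ε := by linarith

theorem hasRetractionalSkeleton (h1 : ∀ s, ‖𝔰.P s‖ ≤ 1) {S : Set (WeakDual ℝ X)}
    (hS : IsCompact S) (s₀ : 𝔰.Γ) (hpres : ∀ s ≥ s₀, MapsTo (adjointMap (𝔰.P s)) S S) :
    HasRetractionalSkeleton S := by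
  have := isCompact_iff_compactSpace.1 hS
  have hext : ∀ {φ ψ : S}, (∀ x, φ.1 x = ψ.1 x) → φ = ψ := fun h =>
    Subtype.ext (DFunLike.ext _ _ h)
  exact ⟨{
    Γ := Ici s₀
    ne := ⟨⟨s₀, le_rfl⟩⟩
    directed := fun s t =>
      let ⟨w, hsw, htw⟩ := 𝔰.directed s t
      ⟨⟨w, s.2.trans hsw⟩, hsw, htw⟩
    r := fun s => adjointOn (𝔰.P s) (hpres s s.2)
    isRetraction := fun s φ => hext fun x => by simp [𝔰.idem]
    metrizable := fun s => metrizableSpace_range_adjointOn (𝔰.idem s) (𝔰.separable s) _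
    tendsto_id := fun φ => tendsto_subtype_weakDual_iff.2 fun x => by
      obtain ⟨s, hx⟩ := 𝔰.covers x
      obtain ⟨w, hw₀, hsw⟩ := 𝔰.directed s₀ s
      refine tendsto_const_nhds.congr' ?_
      filter_upwards [eventually_ge_atTop (⟨w, hw₀⟩ : Ici s₀)] with t ht
      simp [𝔰.P_eq_self_of_le (hsw.trans ht) hx]
    comp_eq_of_le := fun s t hst φ =>
      ⟨hext fun x => by simp [(𝔰.comp_eq_of_le s t hst x).2],
        hext fun x => by simp [(𝔰.comp_eq_of_le s t hst x).1]⟩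
    sup_seq := fun f hf => by
      obtain ⟨t, ht, hcl⟩ := 𝔰.sup_seq (fun n => (f n).1) hf
      have hft : ∀ n, (f n).1 ≤ t := fun n => ht.1 (mem_range_self n)
      refine ⟨⟨t, (f 0).2.trans (hft 0)⟩, ⟨forall_mem_range.2 hft, fun w hw =>
        ht.2 (forall_mem_range.2 fun n => hw (mem_range_self n))⟩,
        fun φ => tendsto_subtype_weakDual_iff.2 fun x => ?_⟩
      exact ((WeakDual.toStrongDual φ.1).continuous.tendsto _).comp
        (𝔰.tendsto_of_isLUB h1 (fun _ _ h => hf.monotone h) ht hcl x) }⟩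

end ProjectionalSkeleton

theorem hasRetractionalSkeleton_dualBall (h : Has1ProjectionalSkeleton X) :
    HasRetractionalSkeleton (dualBall X) := by
  obtain ⟨𝔰, h1⟩ := h
  exact 𝔰.hasRetractionalSkeleton h1 isCompact_dualBall (Classical.arbitrary _)
    fun s _ _ hφ => adjointMap_mem_dualBall (h1 s) hφ

end Adjoint

section ProbMeasures

variable {L : Type u} [TopologicalSpace L] [CompactSpace L]

lemma mem_probMeasuresSet_of_mem_dualBall {φ : WeakDual ℝ C(L, ℝ)}
    (hφ : φ ∈ dualBall C(L, ℝ)) (h1 : φ 1 = 1) : φ ∈ probMeasuresSet L := by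
  refine ⟨h1, fun f hf => ?_⟩
  have hnorm : ‖‖f‖ • (1 : C(L, ℝ)) - f‖ ≤ ‖f‖ := by
    refine (ContinuousMap.norm_le _ (norm_nonneg f)).2 fun x => ?_
    simpa [abs_le, hf x] using (le_abs_self _).trans (f.norm_coe_le_norm x) |>.trans
      (le_add_of_nonneg_right (norm_nonneg f))
  have hle : ‖f‖ - φ f ≤ ‖f‖ := by
    simpa [h1] using (le_abs_self _).trans ((hφ _).trans hnorm)
  linarith

lemma probMeasuresSet_subset_dualBall : probMeasuresSet L ⊆ dualBall C(L, ℝ) := by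
  rintro φ ⟨h1, hpos⟩ f
  have hf : ∀ x, |f x| ≤ ‖f‖ := f.norm_coe_le_norm
  have hle : 0 ≤ φ (‖f‖ • (1 : C(L, ℝ)) - f) := hpos _ fun x => by
    simpa using (abs_le.1 (hf x)).2
  have hge : 0 ≤ φ (‖f‖ • (1 : C(L, ℝ)) + f) := hpos _ fun x => by
    simpa [neg_le_iff_add_nonneg'] using (abs_le.1 (hf x)).1
  rw [map_sub, map_smul, h1, smul_eq_mul, mul_one] at hle
  rw [map_add, map_smul, h1, smul_eq_mul, mul_one] at hge
  exact abs_le.2 ⟨by linarith, by linarith⟩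

lemma isCompact_probMeasuresSet : IsCompact (probMeasuresSet L) := by
  refine isCompact_dualBall.of_isClosed_subset ?_ probMeasuresSet_subset_dualBall
  simp only [probMeasuresSet, ofPred_and, ofPred_forall]
  exact (isClosed_eq (WeakDual.eval_continuous _) continuous_const).inter
    (isClosed_iInter fun f => isClosed_iInter fun _ =>
      isClosed_le continuous_const (WeakDual.eval_continuous f))

theorem hasRetractionalSkeleton_probMeasuresSet (h : Has1ProjectionalSkeleton C(L, ℝ)) :
    HasRetractionalSkeleton (probMeasuresSet L) := by
  obtain ⟨𝔰, h1⟩ := h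
  obtain ⟨s₀, hs₀⟩ := 𝔰.covers 1
  refine 𝔰.hasRetractionalSkeleton h1 isCompact_probMeasuresSet s₀ fun s hs φ hφ =>
    mem_probMeasuresSet_of_mem_dualBall
      (adjointMap_mem_dualBall (h1 s) (probMeasuresSet_subset_dualBall hφ)) ?_
  rw [adjointMap_apply, 𝔰.P_eq_self_of_le hs hs₀, hφ.1]

end ProbMeasures

/-! ### Point evaluations in the induced set -/

section PositiveFunctional

variable {L : Type u} [TopologicalSpace L] {μ : WeakDual ℝ C(L, ℝ)}

lemma exists_apply_eq_zero_one_le_on {C : Set L} (hC : IsCompact C)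
    (h : ∀ y ∈ C, ∃ f : C(L, ℝ), (∀ z, 0 ≤ f z) ∧ μ f = 0 ∧ 0 < f y) :
    ∃ F : C(L, ℝ), (∀ z, 0 ≤ F z) ∧ μ F = 0 ∧ ∀ z ∈ C, 1 ≤ F z := by
  refine hC.induction_on
    (p := fun s => ∃ F : C(L, ℝ), (∀ z, 0 ≤ F z) ∧ μ F = 0 ∧ ∀ z ∈ s, 1 ≤ F z)
    ⟨0, fun _ => le_rfl, map_zero μ, fun _ hz => hz.elim⟩ ?_ ?_ ?_
  · rintro s t hst ⟨F, hF0, hFμ, hF⟩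
    exact ⟨F, hF0, hFμ, fun z hz => hF z (hst hz)⟩
  · rintro s t ⟨F, hF0, hFμ, hF⟩ ⟨G, hG0, hGμ, hG⟩
    refine ⟨F + G, fun z => add_nonneg (hF0 z) (hG0 z), by rw [map_add, hFμ, hGμ, add_zero], ?_⟩
    rintro z (hz | hz)
    · exact le_add_of_le_of_nonneg (hF z hz) (hG0 z)
    · exact le_add_of_nonneg_of_le (hF0 z) (hG z hz)
  · intro y hy
    obtain ⟨f, hf0, hfμ, hfy⟩ := h y hy
    refine ⟨{z | f y / 2 ≤ f z}, mem_nhdsWithin_of_mem_nhds <|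
      f.continuous.continuousAt.eventually_const_le (half_lt_self hfy), (f y / 2)⁻¹ • f,
      fun z => mul_nonneg (by positivity) (hf0 z), by rw [map_smul, hfμ, smul_zero], fun z hz => ?_⟩
    exact (le_inv_mul_iff₀ (half_pos hfy)).2 (by simpa using hz)

/-- Evaluation at `x`, as an element of the weak* dual of `C(L, ℝ)`. -/
noncomputable def dirac (x : L) : WeakDual ℝ C(L, ℝ) :=
  StrongDual.toWeakDual (ContinuousMap.evalCLM ℝ x)

@[simp] lemma dirac_apply (x : L) (f : C(L, ℝ)) : dirac x f = f x := rfl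

lemma continuous_dirac : Continuous (dirac : L → WeakDual ℝ C(L, ℝ)) :=
  WeakDual.continuous_of_continuous_eval fun f => f.continuous

variable [CompactSpace L]

lemma abs_apply_le_apply_of_abs_le (hμ : μ ∈ probMeasuresSet L) {f g : C(L, ℝ)}
    (h : ∀ z, |g z| ≤ f z) : |μ g| ≤ μ f := by
  have hsub : 0 ≤ μ (f - g) := hμ.2 _ fun z => sub_nonneg.2 (abs_le.1 (h z)).2
  have hadd : 0 ≤ μ (f + g) := hμ.2 _ fun z => neg_le_iff_add_nonneg'.1 (abs_le.1 (h z)).1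
  rw [map_sub] at hsub
  rw [map_add] at hadd
  exact abs_le.2 ⟨by linarith, by linarith⟩

lemma dirac_mem_probMeasuresSet (x : L) : dirac x ∈ probMeasuresSet L :=
  ⟨by simp, fun f hf => by simpa using hf x⟩

lemma exists_nonneg_zero_on_closed_pos_at [T2Space L] {F : Set L} (hF : IsClosed F) {y : L}
    (hy : y ∉ F) : ∃ f : C(L, ℝ), (∀ z, 0 ≤ f z) ∧ EqOn f 0 F ∧ 0 < f y := by
  obtain ⟨f, hf0, hf1, hf01⟩ := exists_continuous_zero_one_of_isClosed hF
    (isClosed_singleton (x := y)) (disjoint_singleton_right.2 hy)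
  exact ⟨f, fun z => (hf01 z).1, hf0, by simp [hf1 (mem_singleton y)]⟩

lemma dirac_injective [T2Space L] : Function.Injective (dirac : L → WeakDual ℝ C(L, ℝ)) := by
  intro x y hxy
  by_contra hne
  obtain ⟨f, -, hfx, hfy⟩ := exists_nonneg_zero_on_closed_pos_at (isClosed_singleton (x := x))
    (y := y) (Ne.symm hne)
  exact hfy.ne' ((DFunLike.congr_fun hxy f).symm.trans (hfx rfl))

lemma eq_dirac_of_concentrated (hμ : μ ∈ probMeasuresSet L) {x : L}
    (h : ∀ y ≠ x, ∃ f : C(L, ℝ), (∀ z, 0 ≤ f z) ∧ μ f = 0 ∧ 0 < f y) : μ = dirac x := by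
  refine DFunLike.ext _ _ fun g => ?_
  set g₀ : C(L, ℝ) := g - g x • 1 with hg₀
  have hg₀μ : μ g₀ = μ g - g x := by simp [hg₀, hμ.1]
  have hg₀x : g₀ x = 0 := by simp [hg₀]
  suffices |μ g₀| ≤ 0 by simpa [hg₀μ, sub_eq_zero] using this
  refine le_of_forall_pos_le_add fun ε hε => ?_
  obtain ⟨F, hF0, hFμ, hF⟩ := exists_apply_eq_zero_one_le_on (μ := μ) (C := {y | ε ≤ |g₀ y|})
    (isClosed_le continuous_const g₀.continuous.abs).isCompact fun y hy => h y <| by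
      rintro rfl
      simp only [mem_ofPred_eq, hg₀x, abs_zero] at hy
      exact hε.not_ge hy
  have hdom (z : L) : |g₀ z| ≤ (ε • (1 : C(L, ℝ)) + ‖g₀‖ • F) z := by
    simp only [ContinuousMap.add_apply, ContinuousMap.smul_apply, ContinuousMap.one_apply,
      smul_eq_mul, mul_one]
    rcases lt_or_ge |g₀ z| ε with hz | hz
    · exact le_add_of_le_of_nonneg hz.le (mul_nonneg (norm_nonneg _) (hF0 z))
    · exact le_add_of_nonneg_of_le hε.le ((g₀.norm_coe_le_norm z).trans
        (le_mul_of_one_le_right (norm_nonneg _) (hF z hz)))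
  simpa [hμ.1, hFμ] using abs_apply_le_apply_of_abs_le hμ hdom

end PositiveFunctional

/-- A retractional skeleton on some weak* compact set lying between the set of point evaluations
and the dual unit ball. This treats `(B_{C(L)*}, w*)` and `P(L)` simultaneously. -/
structure DualSkeleton (L : Type u) [TopologicalSpace L] [CompactSpace L] : Type (u + 1) where
  S : Set (WeakDual ℝ C(L, ℝ))
  isCompact : IsCompact S
  subset : S ⊆ dualBall C(L, ℝ)
  dirac_mem : ∀ x, dirac x ∈ S
  skel : RetractionalSkeleton S

section ExistsDualSkeleton

variable {L : Type u} [TopologicalSpace L] [CompactSpace L]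

lemma nonempty_dualSkeleton_of_dualBall (h : HasRetractionalSkeleton (dualBall C(L, ℝ))) :
    Nonempty (DualSkeleton L) :=
  h.map fun 𝔰 => ⟨_, isCompact_dualBall, Subset.rfl,
    fun x => probMeasuresSet_subset_dualBall (dirac_mem_probMeasuresSet x), 𝔰⟩

lemma nonempty_dualSkeleton_of_probMeasuresSet
    (h : HasRetractionalSkeleton (probMeasuresSet L)) : Nonempty (DualSkeleton L) :=
  h.map fun 𝔰 => ⟨_, isCompact_probMeasuresSet, probMeasuresSet_subset_dualBall,
    dirac_mem_probMeasuresSet, 𝔰⟩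

end ExistsDualSkeleton

namespace DualSkeleton

variable {L : Type u} [TopologicalSpace L] [CompactSpace L] (D : DualSkeleton L)

instance : CompactSpace D.S := isCompact_iff_compactSpace.1 D.isCompact

lemma mem_probMeasuresSet {μ : D.S} (h : μ.1 1 = 1) : μ.1 ∈ probMeasuresSet L :=
  mem_probMeasuresSet_of_mem_dualBall (D.subset μ.2) h

lemma continuous_eval (f : C(L, ℝ)) : Continuous fun μ : D.S => μ.1 f :=
  (WeakDual.eval_continuous f).comp continuous_subtype_val

/-- The evaluation at `x`, as a point of the space carrying the skeleton. -/
noncomputable def pt (x : L) : D.S := ⟨dirac x, D.dirac_mem x⟩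

lemma continuous_pt : Continuous D.pt := continuous_dirac.subtype_mk _

lemma pt_injective [T2Space L] : Function.Injective D.pt := fun _ _ h =>
  dirac_injective (congrArg Subtype.val h)

/-- The set of points of `L` whose evaluation functional lies in the set induced by the
skeleton. -/
def good : Set L := D.pt ⁻¹' D.skel.inducedSet

lemma isCorsonCompact [T2Space L] (h : ∀ x, x ∈ D.good) : IsCorsonCompact L :=
  isCorsonCompact_of_mem_inducedSet D.skel D.continuous_pt D.pt_injective h

lemma closure_subset_good_of_countable {A : Set L} (hA : A.Countable) (hAD : A ⊆ D.good) :
    closure A ⊆ D.good := fun _ hx =>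
  D.skel.closure_subset_inducedSet_of_countable (hA.image D.pt) (image_subset_iff.2 hAD)
    (image_closure_subset_closure_image D.continuous_pt (mem_image_of_mem _ hx))

lemma exists_countable_subset_mem_closure [T2Space L] {A : Set L} (hA : A ⊆ D.good) {x : L}
    (hx : x ∈ D.good) (hxA : x ∈ closure A) : ∃ A' ⊆ A, A'.Countable ∧ x ∈ closure A' := by
  obtain ⟨B, hBA, hBc, hxB⟩ := D.skel.exists_countable_subset_mem_closure (image_subset_iff.2 hA) hx
    (image_closure_subset_closure_image D.continuous_pt (mem_image_of_mem _ hxA))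
  obtain ⟨A', hA', rfl⟩ := subset_image_iff.1 hBA
  refine ⟨A', hA', countable_of_injective_of_countable_image D.pt_injective.injOn hBc, ?_⟩
  rwa [(D.continuous_pt.isClosedEmbedding
    D.pt_injective).isEmbedding.closure_eq_preimage_closure_image]

lemma mem_good_of_r_concentrated {x : L} (t : D.skel.Γ) (h1 : (D.skel.r t (D.pt x)).1 1 = 1)
    (h : ∀ y ≠ x, ∃ f : C(L, ℝ), (∀ z, 0 ≤ f z) ∧ (D.skel.r t (D.pt x)).1 f = 0 ∧ 0 < f y) :
    x ∈ D.good :=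
  D.skel.mem_inducedSet_iff.2 ⟨t, Subtype.ext <|
    eq_dirac_of_concentrated (D.mem_probMeasuresSet h1) h⟩

lemma exists_r_pt_mem_and_apply_eq {x : L} {O : Set D.S} (hO : O ∈ 𝓝 (D.pt x)) {J : Type*}
    [Countable J] (f : J → C(L, ℝ)) :
    ∃ t, D.skel.r t (D.pt x) ∈ O ∧ (D.skel.r t (D.pt x)).1 1 = 1 ∧
      ∀ j, (D.skel.r t (D.pt x)).1 (f j) = f j x := by
  obtain ⟨t, htO, ht⟩ := D.skel.exists_r_mem_nhds_and_map_eq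
    ((D.continuous_eval 1).prodMk (continuous_pi fun j => D.continuous_eval (f j))) hO
  exact ⟨t, htO, congrArg Prod.fst ht, congrFun (congrArg Prod.snd ht)⟩

lemma mem_good_of_isGδ [T2Space L] {x : L} (hx : IsGδ {x}) : x ∈ D.good := by
  obtain ⟨U, hU, hUx⟩ := isGδ_iff_eq_iInter_nat.1 hx
  have hxU : ∀ n, x ∈ U n := mem_iInter.1 (hUx ▸ mem_singleton x)
  choose f hfx hf1 hf01 using fun n => exists_continuous_zero_one_of_isClosed
    (isClosed_singleton (x := x)) (hU n).isClosed_compl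
    (disjoint_singleton_left.2 (not_not.2 (hxU n)))
  obtain ⟨t, -, h1, hf⟩ := D.exists_r_pt_mem_and_apply_eq univ_mem f
  refine D.mem_good_of_r_concentrated t h1 fun y hy => ?_
  obtain ⟨n, hn⟩ : ∃ n, y ∉ U n := by
    by_contra! hyU
    exact hy (hUx.ge (mem_iInter.2 hyU))
  exact ⟨f n, fun z => (hf01 n z).1, (hf n).trans (hfx n rfl), by simp [hf1 n hn]⟩

/-- The elements of `S` of total mass one that live on `closure V`; being in the dual unit ball,
they are probability measures. -/
def massOn (V : Set L) : Set D.S :=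
  {μ | μ.1 1 = 1 ∧ ∀ g : C(L, ℝ), EqOn g 0 (closure V) → μ.1 g = 0}

lemma isClosed_massOn (V : Set L) : IsClosed (D.massOn V) := by
  simp only [massOn, ofPred_and, ofPred_forall]
  exact (isClosed_eq (D.continuous_eval 1) continuous_const).inter
    (isClosed_iInter fun g => isClosed_iInter fun _ =>
      isClosed_eq (D.continuous_eval g) continuous_const)

lemma pt_mem_closure_massOn [T2Space L] {V : Set L} (hV : IsOpen V) {c : L}
    (hc : c ∈ closure V) : D.pt c ∈ closure (D.massOn V ∩ D.skel.inducedSet) := by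
  refine mem_closure_iff.2 fun O hO hcO => ?_
  obtain ⟨x, hxO, hxV⟩ := mem_closure_iff.1 hc _ (hO.preimage D.continuous_pt) hcO
  obtain ⟨f, hf0, hf1, hf01⟩ := exists_continuous_zero_one_of_isClosed
    (isClosed_singleton (x := x)) hV.isClosed_compl (disjoint_singleton_left.2 (not_not.2 hxV))
  obtain ⟨t, htO, h1, hf⟩ := D.exists_r_pt_mem_and_apply_eq (hO.mem_nhds hxO) fun _ : Unit => f
  refine ⟨_, htO, ⟨h1, fun g hg => ?_⟩, D.skel.mem_inducedSet_iff.2 ⟨t, D.skel.isRetraction t _⟩⟩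
  have hdom (z : L) : |g z| ≤ (‖g‖ • f) z := by
    simp only [ContinuousMap.smul_apply, smul_eq_mul]
    by_cases hz : z ∈ V
    · simpa [hg (subset_closure hz)] using mul_nonneg (norm_nonneg g) (hf01 z).1
    · simpa [hf1 hz] using g.norm_coe_le_norm z
  simpa [hf (), hf0 (mem_singleton x)] using
    abs_apply_le_apply_of_abs_le (D.mem_probMeasuresSet h1) hdom

/-- Some retraction maps the evaluation at `c` to a probability measure carried by both closures,
hence by `c`. -/
lemma mem_good_of_closure_inter_closure_subset [T2Space L] {V W : Set L} (hV : IsOpen V)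
    (hW : IsOpen W) {c : L} (hcV : c ∈ closure V) (hcW : c ∈ closure W)
    (hVW : closure V ∩ closure W ⊆ {c}) : c ∈ D.good := by
  obtain ⟨t, -, A, hA, B, hB, -, -, htA, htB⟩ := D.skel.exists_r_mem_closure_inter_closure
    inter_subset_right inter_subset_right (D.pt_mem_closure_massOn hV hcV)
    (D.pt_mem_closure_massOn hW hcW) (Classical.arbitrary _)
  have hmV : D.skel.r t (D.pt c) ∈ D.massOn V :=
    closure_minimal (hA.trans inter_subset_left) (D.isClosed_massOn V) htA
  have hmW : D.skel.r t (D.pt c) ∈ D.massOn W :=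
    closure_minimal (hB.trans inter_subset_left) (D.isClosed_massOn W) htB
  refine D.mem_good_of_r_concentrated t hmV.1 fun y hy => ?_
  by_cases hyV : y ∈ closure V
  · obtain ⟨f, hf0, hf, hfy⟩ := exists_nonneg_zero_on_closed_pos_at isClosed_closure
      fun hyW => hy (hVW ⟨hyV, hyW⟩)
    exact ⟨f, hf0, hmW.2 f hf, hfy⟩
  · obtain ⟨f, hf0, hf, hfy⟩ := exists_nonneg_zero_on_closed_pos_at isClosed_closure hyV
    exact ⟨f, hf0, hmV.2 f hf, hfy⟩

end DualSkeleton

/-! ### Gluing points of a compact space -/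

section ClosedRelation

variable {K : Type u} [TopologicalSpace K] [CompactSpace K] {s : Setoid K}

lemma isClosedMap_quotientMk (hs : IsClosed {p : K × K | s p.1 p.2}) :
    IsClosedMap (Quotient.mk s) := by
  intro F hF
  rw [← (isQuotientMap_quotient_mk' (s := s)).isClosed_preimage]
  have hpre : Quotient.mk s ⁻¹' (Quotient.mk s '' F)
      = Prod.snd '' ({p : K × K | s p.1 p.2} ∩ Prod.fst ⁻¹' F) := by
    ext y
    constructor
    · rintro ⟨x, hx, hxy⟩
      exact ⟨(x, y), ⟨Quotient.exact hxy, hx⟩, rfl⟩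
    · rintro ⟨⟨x, _⟩, ⟨hxy, hx⟩, rfl⟩
      exact ⟨x, hx, Quotient.sound hxy⟩
  exact hpre ▸ isClosedMap_snd_of_compactSpace _ (hs.inter (hF.preimage continuous_fst))

lemma t2Space_quotient (hs : IsClosed {p : K × K | s p.1 p.2}) : T2Space (Quotient s) := by
  have hproper : IsProperMap (Quotient.mk s) := by
    refine isProperMap_iff_isClosedMap_and_compact_fibers.2
      ⟨continuous_quotient_mk', isClosedMap_quotientMk hs, fun c => ?_⟩
    obtain ⟨x, rfl⟩ := Quotient.exists_rep c
    have hfibre : Quotient.mk s ⁻¹' {Quotient.mk s x} = {y | s y x} :=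
      ext fun y => Quotient.eq (r := s)
    exact hfibre ▸ (hs.preimage (continuous_id.prodMk continuous_const)).isCompact
  have hdiag : diagonal (Quotient s)
      = Prod.map (Quotient.mk s) (Quotient.mk s) '' {p : K × K | s p.1 p.2} := by
    ext ⟨a, b⟩
    constructor
    · rintro (rfl : a = b)
      obtain ⟨x, rfl⟩ := Quotient.exists_rep a
      exact ⟨(x, x), s.refl x, rfl⟩
    · rintro ⟨p, hp, hpab⟩
      exact (congrArg Prod.fst hpab).symm.trans <|
        (Quotient.sound hp).trans (congrArg Prod.snd hpab)
  exact t2_iff_isClosed_diagonal.2 (hdiag ▸ (hproper.prodMap hproper).isClosedMap _ hs)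

end ClosedRelation

lemma exists_glued_quotient {K : Type u} {T Y : Type*} [TopologicalSpace K] [CompactSpace K]
    [T2Space K] [TopologicalSpace T] [CompactSpace T] [TopologicalSpace Y] [T2Space Y] {h : T → K}
    (hh : Continuous h) (hinj : Function.Injective h) {q : T → Y} (hq : Continuous q) :
    ∃ (L : Type u) (_ : TopologicalSpace L) (_ : CompactSpace L) (_ : T2Space L) (p : K → L),
      Continuous p ∧ Function.Surjective p ∧ (∀ a b, p (h a) = p (h b) ↔ q a = q b) ∧
      ∀ x y, p x = p y → x = y ∨ x ∈ range h ∧ y ∈ range h := by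
  -- `x` and `y` are glued when `e x = e y`, where `e` is `q ∘ h⁻¹` on the range of `h` and
  -- injective off it.
  set e : K → K ⊕ Y := Function.extend h (Sum.inr ∘ q) Sum.inl
  have he_on (a : T) : e (h a) = Sum.inr (q a) := hinj.extend_apply _ _ a
  have he_off {x : K} (hx : x ∉ range h) : e x = Sum.inl x := Function.extend_apply' _ _ x hx
  have he {x y : K} (hxy : e x = e y) : x = y ∨ x ∈ range h ∧ y ∈ range h := by
    by_cases hx : x ∈ range h <;> by_cases hy : y ∈ range h
    · exact Or.inr ⟨hx, hy⟩
    · obtain ⟨a, rfl⟩ := hx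
      simp [he_on, he_off hy] at hxy
    · obtain ⟨b, rfl⟩ := hy
      simp [he_on, he_off hx] at hxy
    · exact Or.inl (by simpa [he_off hx, he_off hy] using hxy)
  have hrel : {p : K × K | Setoid.ker e p.1 p.2}
      = diagonal K ∪ Prod.map h h '' {p : T × T | q p.1 = q p.2} := by
    ext ⟨x, y⟩
    constructor
    · intro (hxy : e x = e y)
      rcases he hxy with rfl | ⟨⟨a, rfl⟩, ⟨b, rfl⟩⟩
      · exact Or.inl rfl
      · exact Or.inr ⟨(a, b), by simpa [he_on] using hxy, rfl⟩
    · rintro (hxy | ⟨⟨a, b⟩, hab, hxy⟩)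
      · exact congrArg e hxy
      · obtain ⟨rfl, rfl⟩ := Prod.mk.inj hxy
        exact (he_on a).trans ((congrArg Sum.inr hab).trans (he_on b).symm)
  have hclosed : IsClosed {p : K × K | Setoid.ker e p.1 p.2} := hrel ▸ isClosed_diagonal.union
    ((isClosed_eq (hq.comp continuous_fst) (hq.comp continuous_snd)).isCompact.image
      (hh.prodMap hh)).isClosed
  exact ⟨Quotient (Setoid.ker e), inferInstance, inferInstance, t2Space_quotient hclosed,
    Quotient.mk _, continuous_quotient_mk', Quotient.mk_surjective,
    fun a b => Quotient.eq.trans (by simp [Setoid.ker_def, he_on]),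
    fun x y hxy => he (Quotient.exact hxy)⟩

section ApproachFromTwoSides

variable {K L : Type*} [TopologicalSpace K] [TopologicalSpace L] {p : K → L} {C : Set K}

lemma isOpen_image_sdiff [CompactSpace K] [T2Space L] (hpc : Continuous p)
    (hsurj : Function.Surjective p) (hC : IsClosed C)
    (hp : ∀ x y, p x = p y → x = y ∨ x ∈ C ∧ y ∈ C) {G : Set K} (hG : IsOpen G) :
    IsOpen (p '' (G \ C)) := by
  rw [← (IsQuotientMap.of_surjective_continuous hsurj hpc).isOpen_preimage]
  suffices p ⁻¹' (p '' (G \ C)) = G \ C by simpa only [this] using hG.sdiff hC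
  refine Subset.antisymm ?_ (subset_preimage_image p _)
  rintro x ⟨y, hy, hyx⟩
  rcases hp y x hyx with rfl | ⟨hyC, -⟩
  · exact hy
  · exact absurd hyC hy.2

lemma map_mem_closure_image_interior_sdiff (hpc : Continuous p) (hdense : Dense Cᶜ) {N : Set K}
    {x : K} (hN : N ∈ 𝓝 x) : p x ∈ closure (p '' (interior N \ C)) :=
  image_closure_subset_closure_image hpc <| mem_image_of_mem p <|
    hdense.open_subset_closure_inter isOpen_interior (mem_interior_iff_mem_nhds.2 hN)

lemma closure_image_interior_sdiff_subset [CompactSpace K] [T2Space L] (hpc : Continuous p)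
    {N : Set K} (hN : IsClosed N) : closure (p '' (interior N \ C)) ⊆ p '' N :=
  closure_minimal (image_mono (sdiff_subset.trans interior_subset))
    (hN.isCompact.image hpc).isClosed

end ApproachFromTwoSides

/-- Neighbourhoods of the two glued points yield open subsets of the quotient whose closures meet
only in the glued point. -/
lemma DualSkeleton.mem_good_of_map_eq {K : Type*} {L : Type u} [TopologicalSpace K]
    [CompactSpace K] [T2Space K] [TopologicalSpace L] [CompactSpace L] [T2Space L]
    (D : DualSkeleton L) {p : K → L} (hpc : Continuous p) (hsurj : Function.Surjective p)
    {C : Set K} (hC : IsClosed C) (hdense : Dense Cᶜ)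
    (hp : ∀ x y, p x = p y → x = y ∨ x ∈ C ∧ y ∈ C) {x₀ x₁ : K} (hne : x₀ ≠ x₁)
    (heq : p x₀ = p x₁) {O : Set K} (hO : O ∈ 𝓝 x₁) (hOC : O ∩ C ⊆ {x₁}) : p x₁ ∈ D.good := by
  obtain ⟨A, hA, B, hB, hAB⟩ := Filter.disjoint_iff.1 (disjoint_nhds_nhds.2 hne)
  obtain ⟨N₀, hN₀, hN₀c, hN₀A⟩ := exists_mem_nhds_isClosed_subset hA
  obtain ⟨N₁, hN₁, hN₁c, hN₁BO⟩ := exists_mem_nhds_isClosed_subset (inter_mem hB hO)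
  refine D.mem_good_of_closure_inter_closure_subset
    (isOpen_image_sdiff hpc hsurj hC hp isOpen_interior)
    (isOpen_image_sdiff hpc hsurj hC hp isOpen_interior)
    (heq ▸ map_mem_closure_image_interior_sdiff hpc hdense hN₀)
    (map_mem_closure_image_interior_sdiff hpc hdense hN₁) ?_
  rintro c ⟨hc₀, hc₁⟩
  obtain ⟨y, hy, rfl⟩ := closure_image_interior_sdiff_subset hpc hN₀c hc₀
  obtain ⟨z, hz, hzy⟩ := closure_image_interior_sdiff_subset hpc hN₁c hc₁
  rcases hp z y hzy with rfl | ⟨hzC, -⟩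
  · exact absurd (hN₁BO hz).1 (disjoint_left.1 hAB (hN₀A hy))
  · rw [mem_singleton_iff, ← hzy, hOC ⟨(hN₁BO hz).2, hzC⟩]

/-! ### Embedded copies of the ordinal segment -/

lemma exists_isOpen_singleton_of_wellFoundedLT {α : Type*} [LinearOrder α] [WellFoundedLT α]
    [TopologicalSpace α] [OrderTopology α] {O : Set α} (hO : IsOpen O) (hne : O.Nonempty) :
    ∃ a ∈ O, IsOpen {a} := by
  let _ : SuccOrder α := SuccOrder.ofLinearWellFoundedLT α
  obtain ⟨a, ha, hmin⟩ := wellFounded_lt.has_min O hne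
  have hIic : Iic a ∈ 𝓝 a := SuccOrder.nhdsLE_eq_nhds a ▸ self_mem_nhdsWithin
  refine ⟨a, ha, (isOpen_singleton_iff_nhds_eq_pure a).2 (le_antisymm ?_ (pure_le_nhds a))⟩
  rw [le_pure_iff]
  exact mem_of_superset (inter_mem (hO.mem_nhds ha) hIic) fun b hb =>
    le_antisymm hb.2 (not_lt.1 (hmin b hb.1))

lemma dense_compl_range_of_isEmbedding {α M : Type*} [TopologicalSpace α] [TopologicalSpace M]
    [PerfectSpace M] (hα : ∀ O : Set α, IsOpen O → O.Nonempty → ∃ a ∈ O, IsOpen {a}) {h : α → M}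
    (hh : IsEmbedding h) : Dense (range h)ᶜ := by
  refine interior_eq_empty_iff_dense_compl.1 (eq_empty_iff_forall_notMem.2 fun x hx => ?_)
  obtain ⟨a, rfl⟩ := interior_subset hx
  obtain ⟨b, hb, hbo⟩ := hα _ (isOpen_interior.preimage hh.continuous) ⟨a, hx⟩
  obtain ⟨O, hO, hOb⟩ := hh.isOpen_iff.1 hbo
  have hsingleton : O ∩ interior (range h) = {h b} := by
    refine Subset.antisymm ?_ (singleton_subset_iff.2 ⟨hOb.ge rfl, hb⟩)
    rintro _ ⟨hyO, hy⟩
    obtain ⟨c, rfl⟩ := interior_subset hy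
    exact congrArg h (hOb.le hyO)
  exact (PerfectSpace.not_isolated (h b)).ne
    ((isOpen_singleton_iff_punctured_nhds _).1 (hsingleton ▸ hO.inter isOpen_interior))

section Segment

open Order

instance : CompactSpace OrdinalSegmentOmega1 :=
  isCompact_iff_compactSpace.1 (Set.Icc_bot (a := omega1) ▸ isCompact_Icc)

lemma isSuccLimit_omega1 : IsSuccLimit omega1 :=
  Cardinal.isSuccLimit_ord (Cardinal.aleph0_le_aleph 1)

lemma isOpen_singleton_segment {a : OrdinalSegmentOmega1} (ha : ¬ IsSuccLimit a.1) :
    IsOpen {a} := by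
  have hpre : Subtype.val ⁻¹' {a.1} = {a} := ext fun b => Subtype.ext_iff.symm
  exact hpre ▸ (SuccOrder.isOpen_singleton_iff.2 ha).preimage continuous_subtype_val

lemma exists_lt_omega1_forall_le {B : Set Ordinal.{0}} (hB : B.Countable)
    (h : ∀ b ∈ B, b < omega1) : ∃ μ < omega1, ∀ b ∈ B, b ≤ μ := by
  have := hB.to_subtype
  have homega : omega1 = Ordinal.omega 1 := Cardinal.ord_aleph 1
  rw [homega] at h ⊢
  exact ⟨⨆ b : B, b.1, Ordinal.iSup_lt_omega_one fun b => h b b.2,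
    fun b hb => Ordinal.le_iSup (fun b : B => b.1) ⟨b, hb⟩⟩

lemma omega1_mem_closure_isSuccLimit :
    (⟨omega1, self_mem_Iic⟩ : OrdinalSegmentOmega1) ∈
      closure {b | b.1 < omega1 ∧ IsSuccLimit b.1} := by
  rw [closure_subtype, mem_closure_iff_nhds]
  intro t ht
  obtain ⟨a, ha, hat⟩ := exists_Ioc_subset_of_mem_nhds ht ⟨0, isSuccLimit_omega1.bot_lt⟩
  have hlt : a + Ordinal.omega0 < omega1 :=
    Ordinal.isPrincipal_add_ord (Cardinal.aleph0_le_aleph 1) ha <| by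
      rw [Cardinal.lt_ord, Ordinal.card_omega0]
      exact Cardinal.aleph0_lt_aleph_one
  exact ⟨_, hat ⟨lt_add_of_pos_right a Ordinal.omega0_pos, hlt.le⟩, ⟨_, hlt.le⟩,
    ⟨hlt, Ordinal.isSuccLimit_add a Ordinal.isSuccLimit_omega0⟩, rfl⟩

/-- The map whose fibres are glued on `[0, ω₁]`: it identifies `λ` with `λ + 1` for every
limit ordinal `λ`, and `0` with `ω₁`, and is the identity on all other ordinals. -/
noncomputable def collapse (a : Ordinal.{0}) : Ordinal.{0} :=
  open Classical in if a = 0 then omega1 else if IsSuccLimit a.pred then a.pred else a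

lemma collapse_zero : collapse 0 = omega1 := if_pos rfl

lemma collapse_of_isSuccLimit {l : Ordinal.{0}} (hl : IsSuccLimit l) : collapse l = l := by
  have hl₀ : l ≠ 0 := hl.ne_bot
  simp [collapse, hl.ordinalPred_eq, hl, hl₀]

lemma collapse_add_one_of_isSuccLimit {l : Ordinal.{0}} (hl : IsSuccLimit l) :
    collapse (l + 1) = l := by
  simp [collapse, hl]

lemma collapse_le {a : Ordinal.{0}} (ha : a ≠ 0) : collapse a ≤ a := by
  rw [collapse, if_neg ha]
  split_ifs
  exacts [Ordinal.pred_le_self a, le_rfl]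

lemma pred_le_collapse {a : Ordinal.{0}} (ha : a ≠ 0) : a.pred ≤ collapse a := by
  rw [collapse, if_neg ha]
  split_ifs
  exacts [le_rfl, Ordinal.pred_le_self a]

lemma continuous_collapse : Continuous collapse := by
  refine continuous_iff_continuousAt.2 fun l => ?_
  by_cases hl : IsSuccLimit l
  · rw [ContinuousAt, collapse_of_isSuccLimit hl]
    refine tendsto_order.2 ⟨fun a ha => ?_, fun a ha => ?_⟩
    · filter_upwards [Ioi_mem_nhds (hl.succ_lt ha)] with b hb
      exact (Ordinal.lt_pred_iff_succ_lt.2 hb).trans_le (pred_le_collapse (bot_lt_of_lt hb).ne')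
    · filter_upwards [Ioo_mem_nhds hl.bot_lt ha] with b hb
      exact (collapse_le hb.1.ne').trans_lt hb.2
  · rw [ContinuousAt, SuccOrder.nhds_eq_pure.2 hl]
    exact tendsto_pure_nhds collapse l

lemma DualSkeleton.mem_good_of_map_eq_segment {M : Type*} {L : Type u} [TopologicalSpace M]
    [CompactSpace M] [T2Space M] [PerfectSpace M] [TopologicalSpace L] [CompactSpace L] [T2Space L]
    (D : DualSkeleton L) {p : M → L} (hpc : Continuous p) (hsurj : Function.Surjective p)
    {h : OrdinalSegmentOmega1 → M}
    (hh : IsEmbedding h) (hp : ∀ x y, p x = p y → x = y ∨ x ∈ range h ∧ y ∈ range h)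
    {a b : OrdinalSegmentOmega1} (hab : a ≠ b) (heq : p (h a) = p (h b))
    (hb : ¬ IsSuccLimit b.1) : p (h a) ∈ D.good := by
  obtain ⟨O, hO, hOb⟩ := hh.isOpen_iff.1 (isOpen_singleton_segment hb)
  refine heq ▸ D.mem_good_of_map_eq hpc hsurj (isCompact_range hh.continuous).isClosed
    (dense_compl_range_of_isEmbedding (fun _ => exists_isOpen_singleton_of_wellFoundedLT) hh) hp
    (hh.injective.ne hab) heq (hO.mem_nhds (hOb.ge rfl)) ?_
  rintro _ ⟨hcO, c, rfl⟩
  exact congrArg h (hOb.le hcO)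

/-- A countable set of countable limit ordinals is bounded by some `μ < ω₁`, so the image of
`ω₁` is not in the closure of its image. -/
lemma DualSkeleton.false_of_collapse {L : Type u} [TopologicalSpace L] [CompactSpace L] [T2Space L]
    (D : DualSkeleton L) {f : OrdinalSegmentOmega1 → L} (hf : Continuous f)
    (hfc : ∀ a b, f a = f b ↔ collapse a.1 = collapse b.1)
    (hgood : ∀ a, IsSuccLimit a.1 → f a ∈ D.good) : False := by
  obtain ⟨_, hA', hA'c, hcl⟩ := D.exists_countable_subset_mem_closure
    (image_subset_iff.2 fun a ha => hgood a ha.2) (hgood ⟨omega1, self_mem_Iic⟩ isSuccLimit_omega1)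
    (image_closure_subset_closure_image hf (mem_image_of_mem f omega1_mem_closure_isSuccLimit))
  obtain ⟨B, hB, rfl⟩ := subset_image_iff.1 hA'
  have hinj : InjOn f B := fun a ha b hb hab => Subtype.ext <| by
    simpa only [collapse_of_isSuccLimit (hB ha).2, collapse_of_isSuccLimit (hB hb).2]
      using (hfc a b).1 hab
  obtain ⟨μ, hμ, hBμ⟩ := exists_lt_omega1_forall_le
    ((countable_of_injective_of_countable_image hinj hA'c).image Subtype.val)
    (forall_mem_image.2 fun b hb => (hB hb).1)
  have hBf : f '' B ⊆ f '' (Subtype.val ⁻¹' Icc 1 μ) := image_mono fun b hb =>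
    ⟨one_le_iff_pos.2 (hB hb).2.bot_lt, hBμ b (mem_image_of_mem _ hb)⟩
  obtain ⟨b, ⟨hb₁, hbμ⟩, hb⟩ := closure_minimal hBf
    ((isClosed_Icc.preimage continuous_subtype_val).isCompact.image hf).isClosed hcl
  have hbω : collapse b.1 = omega1 := by
    rw [(hfc _ _).1 hb, collapse_of_isSuccLimit isSuccLimit_omega1]
  exact ((collapse_le (one_le_iff_pos.1 hb₁).ne').trans_lt (hbμ.trans_lt hμ)).ne hbω

lemma exists_quotient_isEmpty_dualSkeleton {M : Type u} [TopologicalSpace M] [CompactSpace M]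
    [T2Space M] [PerfectSpace M] {h : OrdinalSegmentOmega1 → M} (hh : IsEmbedding h) :
    ∃ (L : Type u) (_ : TopologicalSpace L) (_ : CompactSpace L) (_ : T2Space L) (p : M → L),
      Continuous p ∧ Function.Surjective p ∧ IsEmpty (DualSkeleton L) := by
  obtain ⟨L, _, _, _, p, hpc, hsurj, hpq, hp⟩ := exists_glued_quotient hh.continuous hh.injective
    (continuous_collapse.comp continuous_subtype_val)
  refine ⟨L, _, ‹_›, ‹_›, p, hpc, hsurj,
    ⟨fun D => D.false_of_collapse (hpc.comp hh.continuous) hpq fun l hl => ?_⟩⟩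
  obtain hlω | hlω := lt_or_eq_of_le (mem_Iic.1 l.2)
  · refine D.mem_good_of_map_eq_segment hpc hsurj hh hp
      (b := ⟨l.1 + 1, (isSuccLimit_omega1.succ_lt hlω).le⟩)
      (fun e => (lt_succ l.1).ne (congrArg Subtype.val e)) ((hpq _ _).2 ?_) (not_isSuccLimit_succ _)
    exact (collapse_of_isSuccLimit hl).trans (collapse_add_one_of_isSuccLimit hl).symm
  · refine D.mem_good_of_map_eq_segment hpc hsurj hh hp (b := ⟨0, mem_Iic.2 zero_le⟩)
      (fun e => hl.bot_lt.ne' (congrArg Subtype.val e)) ((hpq _ _).2 ?_) fun h0 => h0.bot_lt.ne rfl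
    exact (collapse_of_isSuccLimit hl).trans (hlω.trans collapse_zero.symm)

end Segment

/-! ### Compact spaces all of whose images admit a skeleton -/

section OnePoint

variable {K : Type*}

/-- The map of `K` onto the one-point compactification of `U` that sends the complement of `U`
to the point at infinity. -/
noncomputable def toOnePoint (U : Set K) : K → OnePoint U :=
  Function.extend Subtype.val OnePoint.some fun _ => OnePoint.infty

lemma toOnePoint_coe {U : Set K} (y : U) : toOnePoint U y = y :=
  Subtype.val_injective.extend_apply _ _ y

lemma toOnePoint_of_notMem {U : Set K} {y : K} (hy : y ∉ U) : toOnePoint U y = OnePoint.infty :=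
  Function.extend_apply' _ _ y fun ⟨z, hz⟩ => hy (hz ▸ z.2)

lemma surjective_toOnePoint {U : Set K} (hU : Uᶜ.Nonempty) : Function.Surjective (toOnePoint U) :=
  OnePoint.rec (hU.imp fun _ => toOnePoint_of_notMem) fun y => ⟨y, toOnePoint_coe y⟩

lemma continuous_toOnePoint [TopologicalSpace K] [T2Space K] {U : Set K} (hU : IsOpen U) :
    Continuous (toOnePoint U) := by
  have hpre {W : Set (OnePoint U)} (hW : OnePoint.infty ∉ W) :
      toOnePoint U ⁻¹' W = Subtype.val '' (((↑) : U → OnePoint U) ⁻¹' W) := by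
    ext y
    by_cases hy : y ∈ U
    · lift y to U using hy
      simp [toOnePoint_coe]
    · simp [toOnePoint_of_notMem hy, hW, hy]
  refine ⟨fun W hW => ?_⟩
  by_cases hinf : OnePoint.infty ∈ W
  · rw [← isClosed_compl_iff, ← preimage_compl, hpre (not_not.2 hinf), preimage_compl]
    exact (((OnePoint.isOpen_iff_of_mem hinf).1 hW).2.image continuous_subtype_val).isClosed
  · rw [hpre hinf]
    exact hU.isOpenMap_subtype_val _ ((OnePoint.isOpen_iff_of_notMem hinf).1 hW)

end OnePoint

lemma isGδ_of_isGδ_preimage {X Y : Type*} [TopologicalSpace X] [TopologicalSpace Y] {p : X → Y}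
    (hp : IsClosedMap p) (hsurj : Function.Surjective p) {S : Set Y} (h : IsGδ (p ⁻¹' S)) :
    IsGδ S := by
  obtain ⟨U, hU, hpU⟩ := isGδ_iff_eq_iInter_nat.1 h
  refine isGδ_iff_eq_iInter_nat.2
    ⟨fun n => (p '' (U n)ᶜ)ᶜ, fun n => (hp _ (hU n).isClosed_compl).isOpen_compl, ?_⟩
  rw [← compl_iUnion, ← image_iUnion, ← compl_iInter, ← hpU, ← preimage_compl,
    image_preimage_eq _ hsurj, compl_compl]

lemma DualSkeleton.exists_countable_subset_map_mem_image_closure {K : Type*} {L : Type u}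
    [TopologicalSpace K] [CompactSpace K] [TopologicalSpace L] [CompactSpace L] [T2Space L]
    (E : DualSkeleton L) {p : K → L} (hpc : Continuous p) (hsurj : Function.Surjective p)
    {G : Set K} (hG : ∀ g ∈ G, IsGδ {g}) (hpG : ∀ g ∈ G, ∀ y, p y = p g → y = g) {x : K}
    (hx : p x ∈ E.good) (hxG : x ∈ closure G) :
    ∃ A ⊆ G, A.Countable ∧ p x ∈ p '' closure A := by
  have hinj : InjOn p G := fun g _ g' hg' hgg' => hpG g' hg' g hgg'
  have hGgood : p '' G ⊆ E.good := by
    rintro _ ⟨g, hg, rfl⟩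
    have hpre : p ⁻¹' {p g} = {g} :=
      Subset.antisymm (hpG g hg) (singleton_subset_iff.2 (mem_singleton (p g)))
    exact E.mem_good_of_isGδ (isGδ_of_isGδ_preimage hpc.isClosedMap hsurj (hpre ▸ hG g hg))
  obtain ⟨_, hA', hA'c, hxA⟩ := E.exists_countable_subset_mem_closure hGgood hx
    (image_closure_subset_closure_image hpc (mem_image_of_mem p hxG))
  obtain ⟨A, hAG, rfl⟩ := subset_image_iff.1 hA'
  exact ⟨A, hAG, countable_of_injective_of_countable_image (hinj.mono hAG) hA'c,
    closure_minimal (image_mono subset_closure) (hpc.isClosedMap _ isClosed_closure) hxA⟩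

/-- Every compact Hausdorff continuous image of `K` admits a `DualSkeleton`; this is what
conditions (iii) and (iv) of the theorem have in common. -/
def ImagesAdmitDualSkeleton (K : Type u) [TopologicalSpace K] : Prop :=
  ∀ (L : Type u) [TopologicalSpace L] [CompactSpace L] [T2Space L],
    (∃ f : K → L, Continuous f ∧ Function.Surjective f) → Nonempty (DualSkeleton L)

section AllGood

variable {K : Type u} [TopologicalSpace K]

lemma neBot_nhdsNE_of_not_isGδ {x : K} (hx : ¬ IsGδ {x}) : NeBot (𝓝[≠] x) :=
  ⟨fun h => hx ((isOpen_singleton_iff_punctured_nhds x).2 h).isGδ⟩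

lemma perfectSpace_onePoint_sdiff_singleton [T2Space K] {U : Set K}
    (hU : IsOpen U) (hGδ : ∀ x ∈ U, ¬ IsGδ {x}) {x : K} (hx : x ∈ U) :
    PerfectSpace (OnePoint ↥(U \ {x})) := by
  have hV : IsOpen (U \ {x}) := hU.sdiff isClosed_singleton
  have : NoncompactSpace ↥(U \ {x}) := by
    refine not_compactSpace_iff.1 fun hc => hGδ x hx ?_
    have hdiff : U \ (U \ {x}) = {x} := by simpa using hx
    exact hdiff ▸ (hU.sdiff (isCompact_iff_compactSpace.2 hc).isClosed).isGδ
  have (v : ↥(U \ {x})) : NeBot (𝓝[≠] v) :=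
    ⟨fun hv => hGδ v v.2.1 <| by
      have himage := hV.isOpenMap_subtype_val _ ((isOpen_singleton_iff_punctured_nhds v).2 hv)
      exact (image_singleton ▸ himage).isGδ⟩
  exact perfectSpace_iff_forall_not_isolated.2 fun z => inferInstance

variable [CompactSpace K] [T2Space K]

/-- If `U` is a nonempty open set without Gδ points, then removing a point `x` of `U` yields a
perfect one-point compactification, in which an embedded `[0, ω₁]` can be collapsed. -/
lemma dense_setOf_isGδ_singleton (hG : InClassG0 K) (hK : ImagesAdmitDualSkeleton K) :
    Dense {x : K | IsGδ {x}} := by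
  refine dense_iff_inter_open.2 fun U hU ⟨x, hx⟩ => ?_
  by_contra hempty
  have hGδ : ∀ y ∈ U, ¬ IsGδ {y} := fun y hy hyG => hempty ⟨y, hy, hyG⟩
  have hV : IsOpen (U \ {x}) := hU.sdiff isClosed_singleton
  have := hV.locallyCompactSpace
  have := perfectSpace_onePoint_sdiff_singleton hU hGδ hx
  have hne : (U \ {x}).Nonempty := by
    have := neBot_nhdsNE_of_not_isGδ (hGδ x hx)
    exact nonempty_of_mem (f := 𝓝[≠] x) (sdiff_mem_nhdsWithin_compl (hU.mem_nhds hx) {x})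
  obtain ⟨h, hh⟩ := hG _ hV hne fun y hy => hGδ y hy.1
  obtain ⟨L, _, _, _, p, hpc, hsurj, hL⟩ := exists_quotient_isEmpty_dualSkeleton hh
  obtain ⟨D⟩ := hK L ⟨p ∘ toOnePoint (U \ {x}), hpc.comp (continuous_toOnePoint hV),
    hsurj.comp (surjective_toOnePoint ⟨x, fun hx' => hx'.2 rfl⟩)⟩
  exact hL.false D

lemma DualSkeleton.mem_good_of_isOpen_singleton_of_ne (D : DualSkeleton K) {x : K}
    (h : ∀ d ≠ x, IsOpen {d}) : x ∈ D.good := by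
  by_cases hfin : ({x}ᶜ : Set K).Finite
  · exact D.mem_good_of_isGδ (compl_compl ({x} : Set K) ▸ hfin.isClosed.isOpen_compl.isGδ)
  obtain ⟨Q, hQx, hQc, hQ⟩ := Set.Infinite.exists_subset_countable_infinite hfin
  obtain ⟨y, hy⟩ := hQ.exists_accPt_principal
  have hyx : y = x := by
    by_contra hyx
    exact (NeBot.mono hy inf_le_left).ne ((isOpen_singleton_iff_punctured_nhds y).1 (h y hyx))
  exact D.closure_subset_good_of_countable hQc (fun d hd => D.mem_good_of_isGδ (h d (hQx hd)).isGδ)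
    (hyx ▸ mem_closure_iff_clusterPt.2 hy.clusterPt)

lemma exists_pair_glued_mem_good (hK : ImagesAdmitDualSkeleton K) {x d : K} (hxd : x ≠ d)
    [NeBot (𝓝[≠] x)] [NeBot (𝓝[≠] d)] :
    ∃ (L : Type u) (_ : TopologicalSpace L) (_ : CompactSpace L) (_ : T2Space L)
      (E : DualSkeleton L) (p : K → L), Continuous p ∧ Function.Surjective p ∧ p x ∈ E.good ∧
        ∀ y z, p y = p z → y = z ∨ y ∈ ({x, d} : Set K) ∧ z ∈ ({x, d} : Set K) := by
  obtain ⟨L, _, _, _, p, hpc, hsurj, hpq, hp⟩ := exists_glued_quotient (K := K)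
    (h := ((↑) : ({x, d} : Set K) → K)) continuous_subtype_val Subtype.val_injective
    (continuous_const (y := ()))
  rw [Subtype.range_coe] at hp
  obtain ⟨E⟩ := hK L ⟨p, hpc, hsurj⟩
  have hdense : Dense ({x, d} : Set K)ᶜ := by
    rw [← singleton_union, compl_union, ← sdiff_eq]
    exact (dense_compl_singleton x).sdiff_singleton d
  have heq : p d = p x := (hpq ⟨d, by simp⟩ ⟨x, by simp⟩).2 rfl
  refine ⟨L, _, ‹_›, ‹_›, E, p, hpc, hsurj, ?_, hp⟩
  refine E.mem_good_of_map_eq hpc hsurj ((finite_singleton d).insert x).isClosed hdense hp hxd.symm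
    heq (isOpen_compl_singleton.mem_nhds hxd) ?_
  rintro y ⟨hyd, hy⟩
  exact hy.resolve_right hyd

/-- Gluing `x` to `d` makes the resulting point good; countable tightness in the quotient then
yields a countable set of Gδ points of `K` accumulating at `x`. -/
lemma DualSkeleton.mem_good_of_ne_nonisolated (D : DualSkeleton K) (hK : ImagesAdmitDualSkeleton K)
    (hdense : Dense {x : K | IsGδ {x}}) {x d : K} (hxd : x ≠ d) [NeBot (𝓝[≠] x)]
    [NeBot (𝓝[≠] d)] : x ∈ D.good := by
  obtain ⟨L, _, _, _, E, p, hpc, hsurj, hpx, hp⟩ := exists_pair_glued_mem_good hK hxd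
  obtain ⟨N, hN, hNc, hNd⟩ := exists_mem_nhds_isClosed_subset (isOpen_compl_singleton.mem_nhds hxd)
  have hxG : x ∈ closure (interior N ∩ ({x | IsGδ {x}} \ {x})) :=
    (hdense.sdiff_singleton x).open_subset_closure_inter isOpen_interior
      (mem_interior_iff_mem_nhds.2 hN)
  have hpG : ∀ g ∈ interior N ∩ ({x | IsGδ {x}} \ {x}), ∀ y, p y = p g → y = g := by
    refine fun g ⟨hgN, _, hgx⟩ y hyg => (hp y g hyg).resolve_right ?_
    rintro ⟨-, hgx' | hgd⟩
    exacts [hgx hgx', hNd (interior_subset hgN) hgd]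
  obtain ⟨A, hA, hAc, y, hyA, hyx⟩ := E.exists_countable_subset_map_mem_image_closure hpc hsurj
    (fun g hg => hg.2.1) hpG hpx hxG
  have hyN : y ∈ N := closure_minimal (hA.trans (inter_subset_left.trans interior_subset)) hNc hyA
  have hy : y = x := (hp y x hyx).elim id fun h => h.1.resolve_right (hNd hyN)
  exact D.closure_subset_good_of_countable hAc (fun g hg => D.mem_good_of_isGδ (hA hg).2.1)
    (hy ▸ hyA)

lemma isCorsonCompact_of_imagesAdmitDualSkeleton (hG : InClassG0 K)
    (hK : ImagesAdmitDualSkeleton K) : IsCorsonCompact K := by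
  obtain ⟨D⟩ := hK K ⟨id, continuous_id, Function.surjective_id⟩
  refine D.isCorsonCompact fun x => ?_
  by_cases hx : IsOpen {x}
  · exact D.mem_good_of_isGδ hx.isGδ
  by_cases hd : ∀ d ≠ x, IsOpen {d}
  · exact D.mem_good_of_isOpen_singleton_of_ne hd
  push Not at hd
  obtain ⟨d, hdx, hd⟩ := hd
  have : NeBot (𝓝[≠] x) := ⟨mt (isOpen_singleton_iff_punctured_nhds x).2 hx⟩
  have : NeBot (𝓝[≠] d) := ⟨mt (isOpen_singleton_iff_punctured_nhds d).2 hd⟩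
  exact D.mem_good_of_ne_nonisolated hK (dense_setOf_isGδ_singleton hG hK) hdx.symm

end AllGood

/-- For a compact Hausdorff space `K` in the class `G₀`, the following are equivalent:
(i) `K` is Corson compact;
(ii) `C(L)` has a 1-projectional skeleton for every continuous image `L` of `K`;
(iii) `(B_{C(L)*}, w*)` has a retractional skeleton for every continuous image `L` of `K`;
(iv) `P(L)` has a retractional skeleton for every continuous image `L` of `K`. -/
theorem corson_tfae_of_inClassG0 (K : Type u) [TopologicalSpace K] [CompactSpace K]
    [T2Space K] (hK : InClassG0 K) :
    List.TFAE [
      IsCorsonCompact K,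
      ∀ (L : Type u) [TopologicalSpace L] [CompactSpace L] [T2Space L],
        (∃ f : K → L, Continuous f ∧ Function.Surjective f) →
          Has1ProjectionalSkeleton C(L, ℝ),
      ∀ (L : Type u) [TopologicalSpace L] [CompactSpace L] [T2Space L],
        (∃ f : K → L, Continuous f ∧ Function.Surjective f) →
          HasRetractionalSkeleton ↥(dualBall C(L, ℝ)),
      ∀ (L : Type u) [TopologicalSpace L] [CompactSpace L] [T2Space L],
        (∃ f : K → L, Continuous f ∧ Function.Surjective f) →
          HasRetractionalSkeleton ↥(probMeasuresSet L)] := by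
  tfae_have 1 → 2 := fun h L _ _ _ ⟨_, hf, hsurj⟩ =>
    has1ProjectionalSkeleton_of_hasRetractionalSkeleton
      (hasRetractionalSkeleton_of_isCorsonCompact h hf hsurj)
  tfae_have 2 → 3 := fun h L _ _ _ hL => hasRetractionalSkeleton_dualBall (h L hL)
  tfae_have 2 → 4 := fun h L _ _ _ hL => hasRetractionalSkeleton_probMeasuresSet (h L hL)
  tfae_have 3 → 1 := fun h => isCorsonCompact_of_imagesAdmitDualSkeleton hK fun L _ _ _ hL =>
    nonempty_dualSkeleton_of_dualBall (h L hL)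
  tfae_have 4 → 1 := fun h => isCorsonCompact_of_imagesAdmitDualSkeleton hK fun L _ _ _ hL =>
    nonempty_dualSkeleton_of_probMeasuresSet (h L hL)
  tfae_finish
end

section
/- Let K be a compact Hausdorff space and let A and B be two subsets of K, each induced by an r-skeleton in K. If M ⊂ K is a set such that A ∩ B ∩ M is dense in M, then A ∩ M = B ∩ M. In particular, A = B whenever A ∩ B is dense in K. -/
/-! The set `D` induced by an r-skeleton has two properties. It is countably closed: countably many
points of `D` lie in a single `r t [K]`, which is closed. It is countably tight: if `x ∈ D` lies in
the closure of `S ⊆ D`, then `x` lies in the closure of a countable `C ⊆ S`. Granting these, a point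
of `A` in the closure of `A ∩ B` lies in the closure of a countable subset of `B`, hence in `B`, and
the roles of `A` and `B` can be exchanged.

For countable tightness, metrizability of `r s [K]` gives a countable `C s ⊆ S` such that
`r s x = r s y` for some `y ∈ closure (C s)`. Choose an increasing sequence `f` with
`C (f n) ⊆ r (f (n + 1)) [K]` and `x ∈ r (f 0) [K]`, and let `t` be its supremum. With `C` the union
of the `C (f n)`, there are points `y n ∈ closure C` such that `r (f m) (y n) = x` for all `m ≤ n`.
A cluster point `z` of `y` satisfies `r (f m) z = x` for all `m`, and it lies in
`closure C ⊆ r t [K]`, so `z = r t z = lim r (f m) z = x`. -/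

open Filter Topology TopologicalSpace Set

universe u v

section CountableTightness

variable {X : Type*} [TopologicalSpace X]

/-- A set is countably closed if it contains the closures of its countable subsets. -/
def IsCountablyClosed (D : Set X) : Prop :=
  ∀ ⦃C⦄, C ⊆ D → C.Countable → closure C ⊆ D

/-- Countable tightness of the subspace `D`, with closures taken in the ambient space. -/
def IsCountablyTight (D : Set X) : Prop :=
  ∀ ⦃S⦄, S ⊆ D → ∀ x ∈ D ∩ closure S, ∃ C ⊆ S, C.Countable ∧ x ∈ closure C

theorem IsCountablyTight.inter_closure_inter_subset {A B : Set X} (hA : IsCountablyTight A)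
    (hB : IsCountablyClosed B) : A ∩ closure (A ∩ B) ⊆ B := by
  intro x hx
  obtain ⟨C, hC, hCc, hxC⟩ := hA inter_subset_left x hx
  exact hB (hC.trans inter_subset_right) hCc hxC

theorem exists_mapClusterPt_of_countablyCompact [CountablyCompactSpace X] {ι : Type*}
    {l : Filter ι} [l.NeBot] [l.IsCountablyGenerated] (u : ι → X) : ∃ a, MapClusterPt a l u := by
  obtain ⟨a, -, ha⟩ := CountablyCompactSpace.isCountablyCompact_univ (E := X) (f := map u l)
    (by simp)
  exact ⟨a, ha⟩

theorem exists_countable_mem_image_closure [CountablyCompactSpace X] {Y : Type*}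
    [TopologicalSpace Y] [FrechetUrysohnSpace Y] [T2Space Y] {f : X → Y} (hf : Continuous f)
    {S : Set X} {y : Y} (hy : y ∈ closure (f '' S)) :
    ∃ C ⊆ S, C.Countable ∧ y ∈ f '' closure C := by
  obtain ⟨v, hv, hvy⟩ := mem_closure_iff_seq_limit.1 hy
  choose c hcS hcv using hv
  obtain ⟨a, ha⟩ := exists_mapClusterPt_of_countablyCompact (l := atTop) c
  have hfc : Tendsto (f ∘ c) atTop (𝓝 y) := by rwa [show f ∘ c = v from funext hcv]
  refine ⟨range c, range_subset_iff.2 hcS, countable_range c, a, ?_, ?_⟩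
  · exact isClosed_closure.mem_of_mapClusterPt ha
      (Eventually.of_forall fun n => subset_closure (mem_range_self n))
  · exact eq_of_nhds_neBot ((ha.continuousAt_comp hf.continuousAt).clusterPt.mono hfc)

end CountableTightness

theorem exists_strictMono_forall_le_succ {α : Type*} [Preorder α] [IsDirectedOrder α]
    [NoMaxOrder α] (a : α) (g : ℕ → α → α) :
    ∃ f : ℕ → α, StrictMono f ∧ f 0 = a ∧ ∀ n, g n (f n) ≤ f (n + 1) := by
  have exists_gt_ge (b c : α) : ∃ d, b < d ∧ c ≤ d := by
    obtain ⟨d, hbd, hcd⟩ := exists_ge_ge b c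
    obtain ⟨e, hde⟩ := exists_gt d
    exact ⟨e, hbd.trans_lt hde, hcd.trans hde.le⟩
  choose next lt_next le_next using exists_gt_ge
  let f : ℕ → α := fun n => Nat.rec a (fun k b => next b (g k b)) n
  exact ⟨f, strictMono_nat_of_lt_succ fun n => lt_next _ _, rfl, fun n => le_next _ _⟩

namespace RetractionalSkeleton

attribute [local instance] RetractionalSkeleton.po RetractionalSkeleton.ne

variable {K : Type u} [TopologicalSpace K] (𝔰 : RetractionalSkeleton K)

instance inst_s4 : IsDirectedOrder 𝔰.Γ := ⟨𝔰.directed⟩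

theorem mem_range_r_iff {s : 𝔰.Γ} {x : K} : x ∈ range (𝔰.r s) ↔ 𝔰.r s x = x :=
  ⟨by rintro ⟨y, rfl⟩; exact 𝔰.isRetraction s y, fun h => ⟨x, h⟩⟩

theorem range_r_mono : Monotone fun s => range (𝔰.r s) := by
  rintro s t hst _ ⟨x, rfl⟩
  exact ⟨𝔰.r s x, (𝔰.comp_eq_of_le s t hst x).2⟩

theorem isClosed_range_r [T2Space K] (s : 𝔰.Γ) : IsClosed (range (𝔰.r s)) := by
  have range_eq : range (𝔰.r s) = {x | 𝔰.r s x = x} := ext fun _ => 𝔰.mem_range_r_iff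
  rw [range_eq]
  exact isClosed_eq (𝔰.r s).continuous continuous_id

/-- Axiom (iii) only speaks of strictly increasing sequences, so an index set with a largest
element, where these need not exist, is treated with a constant sequence. -/
theorem exists_monotone_isLUB_tendsto (s₀ : 𝔰.Γ) (g : ℕ → 𝔰.Γ → 𝔰.Γ) :
    ∃ (f : ℕ → 𝔰.Γ) (t : 𝔰.Γ), Monotone f ∧ s₀ ≤ f 0 ∧ (∀ n, g n (f n) ≤ f (n + 1)) ∧
      IsLUB (range f) t ∧ ∀ x, Tendsto (fun n => 𝔰.r (f n) x) atTop (𝓝 (𝔰.r t x)) := by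
  by_cases hΓ : ∃ m : 𝔰.Γ, IsTop m
  · obtain ⟨m, hm⟩ := hΓ
    exact ⟨fun _ => m, m, monotone_const, hm _, fun _ => hm _, by simp,
      fun _ => tendsto_const_nhds⟩
  · have : NoMaxOrder 𝔰.Γ :=
      ⟨fun s => (isTop_or_exists_gt s).resolve_left fun hs => hΓ ⟨s, hs⟩⟩
    obtain ⟨f, hf, hf0, hg⟩ := exists_strictMono_forall_le_succ s₀ g
    obtain ⟨t, ht, hlim⟩ := 𝔰.sup_seq f hf
    exact ⟨f, t, hf.monotone, hf0.ge, hg, ht, hlim⟩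

theorem bddAbove_of_countable {I : Set 𝔰.Γ} (hI : I.Countable) : BddAbove I := by
  rcases I.eq_empty_or_nonempty with rfl | hne
  · exact bddAbove_empty
  · obtain ⟨s, rfl⟩ := hI.exists_eq_range hne
    obtain ⟨f, t, -, -, hs, ht, -⟩ := 𝔰.exists_monotone_isLUB_tendsto (s 0) fun n _ => s n
    exact ⟨t, forall_mem_range.2 fun n => (hs n).trans (ht.1 (mem_range_self _))⟩

theorem exists_subset_range_r_of_countable {C : Set K} (hC : C.Countable)
    (hCD : C ⊆ 𝔰.inducedSet) : ∃ t, C ⊆ range (𝔰.r t) := by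
  choose! s hs using fun x (hx : x ∈ C) => mem_iUnion.1 (hCD hx)
  obtain ⟨t, ht⟩ := 𝔰.bddAbove_of_countable (hC.image s)
  exact ⟨t, fun x hx => 𝔰.range_r_mono (ht (mem_image_of_mem s hx)) (hs x hx)⟩

theorem isCountablyClosed_inducedSet [T2Space K] : IsCountablyClosed 𝔰.inducedSet := by
  intro C hCD hC
  obtain ⟨t, ht⟩ := 𝔰.exists_subset_range_r_of_countable hC hCD
  exact (closure_minimal ht (𝔰.isClosed_range_r t)).trans
    (subset_iUnion (fun s => range (𝔰.r s)) t)

theorem exists_countable_r_eq_r [CountablyCompactSpace K] {S : Set K} {x : K}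
    (hx : x ∈ closure S) (s : 𝔰.Γ) :
    ∃ C ⊆ S, C.Countable ∧ ∃ y ∈ closure C, 𝔰.r s y = 𝔰.r s x := by
  have := 𝔰.metrizable s
  have hcont : Continuous (rangeFactorization (𝔰.r s)) := (𝔰.r s).continuous.subtype_mk _
  obtain ⟨C, hCS, hC, y, hy, hyx⟩ := exists_countable_mem_image_closure hcont
    (image_closure_subset_closure_image hcont (mem_image_of_mem _ hx))
  exact ⟨C, hCS, hC, y, hy, congrArg Subtype.val hyx⟩

theorem exists_mem_forall_r_eq [CountablyCompactSpace K] [T1Space K] {f : ℕ → 𝔰.Γ}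
    (hf : Monotone f) {E : Set K} (hE : IsClosed E) {x : K} (hx : x ∈ range (𝔰.r (f 0)))
    (hEx : ∀ n, ∃ y ∈ E, 𝔰.r (f n) y = x) : ∃ z ∈ E, ∀ n, 𝔰.r (f n) z = x := by
  choose y hyE hyx using hEx
  obtain ⟨z, hz⟩ := exists_mapClusterPt_of_countablyCompact (l := atTop) y
  refine ⟨z, hE.mem_of_mapClusterPt hz (Eventually.of_forall hyE), fun m => ?_⟩
  have hry : ∀ n ≥ m, 𝔰.r (f m) (y n) = x := fun n hmn => calc
    𝔰.r (f m) (y n) = 𝔰.r (f m) (𝔰.r (f n) (y n)) := (𝔰.comp_eq_of_le _ _ (hf hmn) _).1.symm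
    _ = 𝔰.r (f m) x := by rw [hyx]
    _ = x := 𝔰.mem_range_r_iff.1 (𝔰.range_r_mono (hf m.zero_le) hx)
  exact (isClosed_singleton.preimage (𝔰.r (f m)).continuous).mem_of_mapClusterPt hz
    ((eventually_ge_atTop m).mono hry)

theorem isCountablyTight_inducedSet [CountablyCompactSpace K] [T2Space K] :
    IsCountablyTight 𝔰.inducedSet := by
  rintro S hS x ⟨hxD, hxS⟩
  obtain ⟨s₀, hs₀⟩ := mem_iUnion.1 hxD
  choose C hCS hC y hyC hyx using 𝔰.exists_countable_r_eq_r hxS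
  choose g hg using fun s => 𝔰.exists_subset_range_r_of_countable (hC s) ((hCS s).trans hS)
  obtain ⟨f, t, hf, hs₀f, hgf, ht, hlim⟩ := 𝔰.exists_monotone_isLUB_tendsto s₀ fun _ => g
  have hxf : ∀ n, x ∈ range (𝔰.r (f n)) := fun n =>
    𝔰.range_r_mono (hs₀f.trans (hf n.zero_le)) hs₀
  have hCt : closure (⋃ n, C (f n)) ⊆ range (𝔰.r t) :=
    closure_minimal (iUnion_subset fun n => (hg (f n)).trans
      (𝔰.range_r_mono ((hgf n).trans (ht.1 (mem_range_self _))))) (𝔰.isClosed_range_r t)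
  obtain ⟨z, hzC, hzx⟩ : ∃ z ∈ closure (⋃ n, C (f n)), ∀ n, 𝔰.r (f n) z = x :=
    𝔰.exists_mem_forall_r_eq hf isClosed_closure (hxf 0) fun n =>
      ⟨y (f n), closure_mono (subset_iUnion (fun n => C (f n)) n) (hyC _),
        (hyx _).trans (𝔰.mem_range_r_iff.1 (hxf n))⟩
  have hxz : x = z := calc
    x = 𝔰.r t z := tendsto_nhds_unique (by simp [hzx]) (hlim z)
    _ = z := 𝔰.mem_range_r_iff.1 (hCt hzC)
  exact ⟨⋃ n, C (f n), iUnion_subset fun n => hCS _, countable_iUnion fun n => hC _, hxz ▸ hzC⟩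

end RetractionalSkeleton

theorem inducedByRSkeleton_unique_general {K : Type u} [TopologicalSpace K]
    [CountablyCompactSpace K] [T2Space K] {A B M : Set K} (hA : IsInducedByRSkeleton A)
    (hB : IsInducedByRSkeleton B) (hM : M ⊆ closure (A ∩ B)) : A ∩ M = B ∩ M := by
  obtain ⟨𝔰, rfl⟩ := hA
  obtain ⟨𝔱, rfl⟩ := hB
  ext x
  refine and_congr_left fun hxM => ⟨fun hx => ?_, fun hx => ?_⟩
  · exact 𝔰.isCountablyTight_inducedSet.inter_closure_inter_subset
      𝔱.isCountablyClosed_inducedSet ⟨hx, hM hxM⟩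
  · exact 𝔱.isCountablyTight_inducedSet.inter_closure_inter_subset
      𝔰.isCountablyClosed_inducedSet ⟨hx, inter_comm 𝔰.inducedSet _ ▸ hM hxM⟩

/-- If `A` and `B` are induced by r-skeletons in a compact Hausdorff space `K` and
`A ∩ B ∩ M` is dense in `M ⊆ K`, then `A ∩ M = B ∩ M`; in particular `A = B` whenever
`A ∩ B` is dense in `K`. -/
theorem inducedByRSkeleton_unique (K : Type u) [TopologicalSpace K] [CompactSpace K]
    [T2Space K] (A B : Set K) (hA : IsInducedByRSkeleton A) (hB : IsInducedByRSkeleton B) :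
    (∀ M : Set K, M ⊆ closure (A ∩ B ∩ M) → A ∩ M = B ∩ M) ∧
      (Dense (A ∩ B) → A = B) :=
  ⟨fun _ hM => inducedByRSkeleton_unique_general hA hB (hM.trans (closure_mono inter_subset_left)),
    fun h => by simpa using inducedByRSkeleton_unique_general hA hB h.closure_eq.ge⟩
end

section
/- Let K be a compact Hausdorff space, F ⊂ K a closed subset, and D ⊂ K a set induced by an r-skeleton in K. If D ∩ F is dense in F, then D ∩ F is induced by an r-skeleton in the compact space F. -/
/-!
The retractions of the new skeleton are the restrictions to `F` of those `r s` that map `F` into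
itself. The set of such indices is closed under suprema of increasing sequences because `F` contains
the limits of its convergent sequences, so everything rests on its cofinality.

Start from `s` and build an increasing sequence `s = f 0 ≤ f 1 ≤ ...` together with countable sets
`A n ⊆ D ∩ F` such that `r (f n) '' A n` is dense in `r (f n) '' F` and
`A n ⊆ range (r (f (n + 1)))`; this is possible because `r (f n) '' F`, being countably compact and
metrizable, is compact and hence separable. Let `t` be the supremum of the sequence and `C` the set
of fixed points of `r t` in `F`. It contains every `A n`, so `r (f n) '' C = r (f n) '' F` because
`r (f n) '' C` is compact too. Hence for `x ∈ F` the sets `{y ∈ C | r (f n) y = r (f n) x}` are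
nonempty; they decrease with `n`, so by countable compactness some `y` lies in all of them, and
`r t x = lim r (f n) x = lim r (f n) y = r t y = y ∈ F`.
-/

open Filter Topology TopologicalSpace Set

universe u v

theorem exists_countable_subset_image_subset_closure {X Y : Type*}
    [TopologicalSpace Y] [PseudoMetrizableSpace Y] {g : X → Y} {E : Set X}
    (hE : IsSeparable (g '' E)) :
    ∃ A ⊆ E, A.Countable ∧ g '' E ⊆ closure (g '' A) := by
  obtain ⟨T, hTE, hTc, hT⟩ := hE.exists_countable_dense_subset
  obtain ⟨A, hAE, hA⟩ := SurjOn.exists_bijOn_subset hTE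
  exact ⟨A, hAE, hA.mapsTo.countable_of_injOn hA.injOn hTc, hA.image_eq.symm ▸ hT⟩

section CountablyCompact

variable {X Y : Type*} [TopologicalSpace X] [TopologicalSpace Y] {C E F : Set X}

theorem isCountablyCompact_inter_of_isClosed (hF : IsCountablyCompact F) (hC : IsClosed C) :
    IsCountablyCompact (F ∩ C) := by
  intro l _ _ hl
  obtain ⟨a, haF, ha⟩ := hF (hl.trans (principal_mono.2 inter_subset_left))
  exact ⟨a, ⟨haF, isClosed_iff_clusterPt.1 hC a
    (ha.mono (hl.trans (principal_mono.2 inter_subset_right)))⟩, ha⟩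

theorem mem_of_tendsto_of_isCountablyCompact [T2Space X] (hF : IsCountablyCompact F) {u : ℕ → X}
    {a : X} (hu : ∀ n, u n ∈ F) (ha : Tendsto u atTop (𝓝 a)) : a ∈ F := by
  obtain ⟨b, hbF, hb⟩ := hF.seq_clusterPt u (Eventually.of_forall hu)
  have : (𝓝 b ⊓ 𝓝 a).NeBot := hb.neBot.mono (inf_le_inf_left _ ha)
  rwa [← eq_of_nhds_neBot this]

theorem isCompact_of_isCountablyCompact [PseudoMetrizableSpace X] (hF : IsCountablyCompact F) :
    IsCompact F := by
  let := pseudoMetrizableSpacePseudoMetric X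
  exact hF.isSeqCompact.isCompact

theorem exists_countable_subset_forall_image_subset_image [MetrizableSpace Y] {g : X → Y}
    (hg : Continuous g) (hF : IsCountablyCompact F) (hEF : E ⊆ F) (hFE : F ⊆ closure E) :
    ∃ A ⊆ E, A.Countable ∧ ∀ C, IsCountablyCompact C → A ⊆ C → g '' F ⊆ g '' C := by
  have hsep : IsSeparable (g '' E) :=
    (isCompact_of_isCountablyCompact (hF.image hg)).isSeparable.mono (image_mono hEF)
  obtain ⟨A, hAE, hAc, hA⟩ := exists_countable_subset_image_subset_closure hsep
  refine ⟨A, hAE, hAc, fun C hC hAC => ?_⟩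
  have hgC : IsClosed (g '' C) := (isCompact_of_isCountablyCompact (hC.image hg)).isClosed
  calc g '' F ⊆ g '' closure E := image_mono hFE
    _ ⊆ closure (g '' E) := image_closure_subset_closure_image hg
    _ ⊆ closure (g '' A) := closure_minimal hA isClosed_closure
    _ ⊆ g '' C := closure_minimal (image_mono hAC) hgC

theorem exists_mem_forall_apply_eq [T1Space Y] (hC : IsCountablyCompact C) {g : ℕ → X → Y}
    (hg : ∀ n, Continuous (g n)) (hfactor : ∀ m n, m ≤ n → ∀ y z, g n y = g n z → g m y = g m z)
    {x : X} (hx : ∀ n, g n x ∈ g n '' C) : ∃ y ∈ C, ∀ n, g n y = g n x := by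
  choose u huC hu using hx
  obtain ⟨y, hyC, hy⟩ := hC.seq_clusterPt u (Eventually.of_forall huC)
  refine ⟨y, hyC, fun m => ?_⟩
  have hclosed : IsClosed (g m ⁻¹' {g m x}) := isClosed_singleton.preimage (hg m)
  exact hclosed.mem_of_mapClusterPt hy
    (eventually_atTop.2 ⟨m, fun n hmn => hfactor m n hmn _ _ (hu n)⟩)

end CountablyCompact

theorem exists_subseq_strictMono_or_const {α : Type*} [PartialOrder α] {f : ℕ → α}
    (hf : Monotone f) :
    ∃ φ : ℕ → ℕ, StrictMono φ ∧ (StrictMono (f ∘ φ) ∨ ∃ a, f ∘ φ = fun _ => a) := by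
  obtain ⟨φ, hlt | hnlt⟩ := exists_increasing_or_nonincreasing_subseq (· < ·) f
  · exact ⟨φ, φ.strictMono, Or.inl fun m n hmn => hlt m n hmn⟩
  · refine ⟨φ, φ.strictMono, Or.inr ⟨f (φ 0), funext fun n => ?_⟩⟩
    have hle : f (φ 0) ≤ f (φ n) := hf (φ.monotone n.zero_le)
    rcases n.eq_zero_or_pos with rfl | hn
    · rfl
    · exact (hle.eq_of_not_lt (hnlt 0 n hn)).symm

attribute [local instance] RetractionalSkeleton.po RetractionalSkeleton.ne

namespace RetractionalSkeleton

variable {K : Type u} [TopologicalSpace K] (𝔰 : RetractionalSkeleton K)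

theorem apply_eq_self_of_mem_range {s t : 𝔰.Γ} (hst : s ≤ t) {x : K} (hx : x ∈ range (𝔰.r s)) :
    𝔰.r t x = x := by
  obtain ⟨y, rfl⟩ := hx
  exact (𝔰.comp_eq_of_le s t hst y).2

theorem apply_eq_apply_of_le {s t : 𝔰.Γ} (hst : s ≤ t) {x y : K} (hxy : 𝔰.r t x = 𝔰.r t y) :
    𝔰.r s x = 𝔰.r s y := by
  rw [← (𝔰.comp_eq_of_le s t hst x).1, hxy, (𝔰.comp_eq_of_le s t hst y).1]

theorem exists_subseq_isLUB_and_tendsto {f : ℕ → 𝔰.Γ} (hf : Monotone f) :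
    ∃ φ : ℕ → ℕ, StrictMono φ ∧ ∃ t, IsLUB (range f) t ∧
      ∀ x, Tendsto (fun n => 𝔰.r (f (φ n)) x) atTop (𝓝 (𝔰.r t x)) := by
  obtain ⟨φ, hφ, hlim⟩ : ∃ φ : ℕ → ℕ, StrictMono φ ∧ ∃ t, IsLUB (range (f ∘ φ)) t ∧
      ∀ x, Tendsto (fun n => 𝔰.r ((f ∘ φ) n) x) atTop (𝓝 (𝔰.r t x)) := by
    obtain ⟨φ, hφ, hstrict | ⟨t, hconst⟩⟩ := exists_subseq_strictMono_or_const hf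
    · exact ⟨φ, hφ, 𝔰.sup_seq _ hstrict⟩
    · refine ⟨φ, hφ, t, ?_, fun x => ?_⟩
      · rw [hconst, range_const]
        exact isLUB_singleton
      · rw [hconst]
        exact tendsto_const_nhds
  rw [IsLUB, hf.upperBounds_range_comp_tendsto_atTop hφ.tendsto_atTop] at hlim
  exact ⟨φ, hφ, hlim⟩

theorem exists_isLUB_range_of_monotone {f : ℕ → 𝔰.Γ} (hf : Monotone f) :
    ∃ t, IsLUB (range f) t :=
  let ⟨_, _, t, ht, _⟩ := 𝔰.exists_subseq_isLUB_and_tendsto hf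
  ⟨t, ht⟩

theorem tendsto_of_isLUB_range {f : ℕ → 𝔰.Γ} (hf : Monotone f) {t : 𝔰.Γ}
    (ht : IsLUB (range f) t) (x : K) :
    Tendsto (fun n => 𝔰.r (f n) x) atTop (𝓝 (𝔰.r t x)) := by
  refine tendsto_of_subseq_tendsto fun ns hns => ?_
  obtain ⟨ψ, -, hψ⟩ := strictMono_subseq_of_tendsto_atTop hns
  have hmono : Monotone (f ∘ ns ∘ ψ) := hf.comp hψ.monotone
  obtain ⟨φ, -, t', ht', hlim⟩ := 𝔰.exists_subseq_isLUB_and_tendsto hmono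
  rw [IsLUB, hf.upperBounds_range_comp_tendsto_atTop hψ.tendsto_atTop] at ht'
  obtain rfl : t = t' := ht.unique ht'
  exact ⟨ψ ∘ φ, hlim x⟩

theorem bddAbove_of_countable_s7 {S : Set 𝔰.Γ} (hS : S.Countable) : BddAbove S := by
  rcases S.eq_empty_or_nonempty with rfl | hne
  · exact bddAbove_empty
  obtain ⟨u, rfl⟩ := hS.exists_eq_range hne
  choose join le_join_left le_join_right using 𝔰.directed
  let f : ℕ → 𝔰.Γ := Nat.rec (u 0) fun n s => join s (u n)
  have hf : Monotone f := monotone_nat_of_le_succ fun n => le_join_left (f n) (u n)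
  obtain ⟨t, ht⟩ := 𝔰.exists_isLUB_range_of_monotone hf
  refine ⟨t, forall_mem_range.2 fun n => ?_⟩
  exact (le_join_right (f n) (u n)).trans (ht.1 (mem_range_self (n + 1)))

theorem exists_ge_subset_range (s : 𝔰.Γ) {A : Set K} (hAc : A.Countable)
    (hA : A ⊆ 𝔰.inducedSet) : ∃ t, s ≤ t ∧ A ⊆ range (𝔰.r t) := by
  choose! index hindex using fun x (hx : x ∈ A) => mem_iUnion.1 (hA hx)
  obtain ⟨t, ht⟩ := 𝔰.bddAbove_of_countable_s7 ((hAc.image index).insert s)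
  refine ⟨t, ht (mem_insert _ _), fun x hx => ⟨x, ?_⟩⟩
  exact 𝔰.apply_eq_self_of_mem_range (ht (mem_insert_of_mem _ (mem_image_of_mem index hx)))
    (hindex x hx)

section Invariant

variable {C E F : Set K}

theorem exists_countable_subset_forall_apply_image_subset (hF : IsCountablyCompact F)
    (hEF : E ⊆ F) (hFE : F ⊆ closure E) (s : 𝔰.Γ) :
    ∃ A ⊆ E, A.Countable ∧ ∀ C, IsCountablyCompact C → A ⊆ C → 𝔰.r s '' F ⊆ 𝔰.r s '' C := by
  have := 𝔰.metrizable s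
  obtain ⟨A, hAE, hAc, hA⟩ := exists_countable_subset_forall_image_subset_image
    (𝔰.r s).continuous.rangeFactorization hF hEF hFE
  refine ⟨A, hAE, hAc, fun C hC hAC => ?_⟩
  have hval : Subtype.val ∘ rangeFactorization (𝔰.r s) = 𝔰.r s := rfl
  simpa only [← image_comp, hval] using image_mono (f := Subtype.val) (hA C hC hAC)

theorem apply_mem_of_isLUB_range [T2Space K] {f : ℕ → 𝔰.Γ} (hf : Monotone f) {t : 𝔰.Γ}
    (ht : IsLUB (range f) t) (hC : IsCountablyCompact C) (hfix : ∀ y ∈ C, 𝔰.r t y = y) {x : K}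
    (hx : ∀ n, 𝔰.r (f n) x ∈ 𝔰.r (f n) '' C) : 𝔰.r t x ∈ C := by
  obtain ⟨y, hyC, hy⟩ := exists_mem_forall_apply_eq hC (fun n => (𝔰.r (f n)).continuous)
    (fun m n hmn _ _ => 𝔰.apply_eq_apply_of_le (hf hmn)) hx
  have hxy : 𝔰.r t x = 𝔰.r t y :=
    tendsto_nhds_unique (𝔰.tendsto_of_isLUB_range hf ht x) <| by
      simpa only [hy] using 𝔰.tendsto_of_isLUB_range hf ht y
  rwa [hxy, hfix y hyC]

theorem isCofinal_setOf_mapsTo [T2Space K] (hF : IsCountablyCompact F)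
    (hdense : F ⊆ closure (𝔰.inducedSet ∩ F)) : IsCofinal {t | MapsTo (𝔰.r t) F F} := by
  intro s
  choose A hAsub hAc hA using
    𝔰.exists_countable_subset_forall_apply_image_subset hF inter_subset_right hdense
  choose next le_next hnext using fun t =>
    𝔰.exists_ge_subset_range t (hAc t) ((hAsub t).trans inter_subset_left)
  let f : ℕ → 𝔰.Γ := fun n => next^[n] s
  have hf : Monotone f := fun m n hmn => Function.monotone_iterate_of_id_le le_next hmn s
  have hf_succ (n : ℕ) : f (n + 1) = next (f n) := Function.iterate_succ_apply' next n s
  obtain ⟨t, ht⟩ := 𝔰.exists_isLUB_range_of_monotone hf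
  have le_t (n : ℕ) : f n ≤ t := ht.1 (mem_range_self n)
  let C : Set K := F ∩ {y | 𝔰.r t y = y}
  have hC : IsCountablyCompact C :=
    isCountablyCompact_inter_of_isClosed hF (isClosed_eq (𝔰.r t).continuous continuous_id)
  have hAC (n : ℕ) : A (f n) ⊆ C := fun y hy =>
    ⟨(hAsub _ hy).2, 𝔰.apply_eq_self_of_mem_range (hf_succ n ▸ le_t (n + 1)) (hnext _ hy)⟩
  refine ⟨t, fun x hx => ?_, le_t 0⟩
  have hxC : 𝔰.r t x ∈ C := 𝔰.apply_mem_of_isLUB_range hf ht hC (fun _ hy => hy.2) fun n =>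
    hA _ C hC (hAC n) (mem_image_of_mem _ hx)
  exact hxC.1

theorem mapsTo_of_isLUB_range [T2Space K] (hF : IsCountablyCompact F) {f : ℕ → 𝔰.Γ}
    (hf : Monotone f) {t : 𝔰.Γ} (ht : IsLUB (range f) t) (hmaps : ∀ n, MapsTo (𝔰.r (f n)) F F) :
    MapsTo (𝔰.r t) F F := fun x hx =>
  mem_of_tendsto_of_isCountablyCompact hF (fun n => hmaps n hx)
    (𝔰.tendsto_of_isLUB_range hf ht x)

end Invariant

section Subskeleton

variable {Λ : Set 𝔰.Γ} (hΛ : IsCofinal Λ)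
  (hsup : ∀ f : ℕ → 𝔰.Γ, StrictMono f → (∀ n, f n ∈ Λ) → ∀ t, IsLUB (range f) t → t ∈ Λ)

/-- The skeleton obtained by keeping only the indices in a cofinal set `Λ` that is closed under
suprema of strictly increasing sequences. -/
def subskeleton : RetractionalSkeleton K where
  Γ := Λ
  ne := hΛ.nonempty.to_subtype
  directed s t := by
    obtain ⟨w, hsw, htw⟩ := 𝔰.directed s t
    obtain ⟨v, hv, hwv⟩ := hΛ w
    exact ⟨⟨v, hv⟩, hsw.trans hwv, htw.trans hwv⟩
  r s := 𝔰.r s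
  isRetraction s := 𝔰.isRetraction s
  metrizable s := 𝔰.metrizable s
  tendsto_id x := by
    have hval : Tendsto (Subtype.val : Λ → 𝔰.Γ) atTop atTop :=
      tendsto_atTop_atTop_of_monotone (Subtype.mono_coe Λ) fun s =>
        let ⟨t, ht, hst⟩ := hΛ s
        ⟨⟨t, ht⟩, hst⟩
    exact (𝔰.tendsto_id x).comp hval
  comp_eq_of_le s t := 𝔰.comp_eq_of_le s t
  sup_seq f hf := by
    have hf' : StrictMono fun n => (f n : 𝔰.Γ) := hf
    obtain ⟨t, ht, hlim⟩ := 𝔰.sup_seq _ hf'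
    refine ⟨⟨t, hsup _ hf' (fun n => (f n).2) t ht⟩, ⟨?_, fun b hb => ht.2 ?_⟩, hlim⟩
    · exact forall_mem_range.2 fun n => ht.1 (mem_range_self n)
    · exact forall_mem_range.2 fun n => hb (mem_range_self n)

theorem inducedSet_subskeleton : (𝔰.subskeleton hΛ hsup).inducedSet = 𝔰.inducedSet := by
  refine Subset.antisymm (iUnion_subset fun s => subset_iUnion_of_subset s.1 Subset.rfl) ?_
  refine iUnion_subset fun s x hx => ?_
  obtain ⟨t, ht, hst⟩ := hΛ s
  exact mem_iUnion.2 ⟨⟨t, ht⟩, x, 𝔰.apply_eq_self_of_mem_range hst hx⟩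

end Subskeleton

section Restrict

variable {F : Set K} (hF : ∀ s, MapsTo (𝔰.r s) F F)

/-- The skeleton induced on a subspace `F` that is invariant under all retractions. -/
def restrict : RetractionalSkeleton F where
  Γ := 𝔰.Γ
  directed := 𝔰.directed
  r s := ⟨(hF s).restrict, (𝔰.r s).continuous.restrict (hF s)⟩
  isRetraction s x := Subtype.ext (𝔰.isRetraction s x)
  metrizable s := by
    have := 𝔰.metrizable s
    have hmaps : ∀ y : range (hF s).restrict, (y : K) ∈ range (𝔰.r s) := by
      rintro ⟨_, x, rfl⟩
      exact mem_range_self (x : K)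
    exact ((IsEmbedding.subtypeVal.comp IsEmbedding.subtypeVal).codRestrict _ hmaps).metrizableSpace
  tendsto_id x := tendsto_subtype_rng.2 (𝔰.tendsto_id x)
  comp_eq_of_le s t hst x :=
    (𝔰.comp_eq_of_le s t hst x).imp Subtype.ext Subtype.ext
  sup_seq f hf :=
    let ⟨t, ht, hlim⟩ := 𝔰.sup_seq f hf
    ⟨t, ht, fun x => tendsto_subtype_rng.2 (hlim x)⟩

theorem inducedSet_restrict : (𝔰.restrict hF).inducedSet = Subtype.val ⁻¹' 𝔰.inducedSet := by
  ext x
  refine mem_iUnion.trans (Iff.trans (exists_congr fun s => ?_) mem_iUnion.symm)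
  constructor
  · rintro ⟨y, rfl⟩
    exact mem_range_self (y : K)
  · exact fun hx => ⟨x, Subtype.ext (𝔰.apply_eq_self_of_mem_range le_rfl hx)⟩

end Restrict

end RetractionalSkeleton

theorem inducedByRSkeleton_inter_closed_general {K : Type u} [TopologicalSpace K] [T2Space K]
    {F D : Set K} (hF : IsCountablyCompact F) (hD : IsInducedByRSkeleton D)
    (hdense : F ⊆ closure (D ∩ F)) : IsInducedByRSkeleton (Subtype.val ⁻¹' D : Set F) := by
  obtain ⟨𝔰, rfl⟩ := hD
  let 𝔱 := 𝔰.subskeleton (𝔰.isCofinal_setOf_mapsTo hF hdense)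
    fun _ hf hmaps _ ht => 𝔰.mapsTo_of_isLUB_range hF hf.monotone ht hmaps
  have hmaps : ∀ s, MapsTo (𝔱.r s) F F := Subtype.prop
  refine ⟨𝔱.restrict hmaps, ?_⟩
  rw [𝔱.inducedSet_restrict hmaps, 𝔰.inducedSet_subskeleton]

/-- If `D` is induced by an r-skeleton in a compact Hausdorff space `K`, `F ⊆ K` is closed
and `D ∩ F` is dense in `F`, then `D ∩ F` is induced by an r-skeleton in the compact
space `F`. -/
theorem inducedByRSkeleton_inter_closed (K : Type u) [TopologicalSpace K] [CompactSpace K]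
    [T2Space K] (F : Set K) (hF : IsClosed F) (D : Set K) (hD : IsInducedByRSkeleton D)
    (hdense : F ⊆ closure (D ∩ F)) :
    IsInducedByRSkeleton (Subtype.val ⁻¹' D : Set ↥F) :=
  inducedByRSkeleton_inter_closed_general hF.isCompact.isCountablyCompact hD hdense
end
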